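/- arXiv:2208.06467 — 4 statements merged into one kernel-verified Lean document; each statement's English description precedes it below -/
import Mathlib

section
/- For d = (d₁, …, d_n) ∈ ℕⁿ let I_d = {α ∈ ℤⁿ : |α_j| ≤ d_j for all j} and let Trig_{I_d}(𝕋ⁿ) ⊆ C(𝕋ⁿ) be the linear span of the characters z ↦ z^α = z₁^{α₁}⋯z_n^{α_n}, α ∈ I_d, with the supremum norm on the n-dimensional torus 𝕋ⁿ. Then inf{‖Q‖ : Q a bounded linear projection of C(𝕋ⁿ) onto Trig_{I_d}(𝕋ⁿ)} = ∏_{j=1}^n L_{d_j}, where L_d = (1/2π) ∫₀^{2π} |Σ_{k=−d}^{d} e^{ikt}| dt is the d-th Lebesgue constant; moreover the infimum is attained by the Fourier projection f ↦ Σ_{α∈I_d} f̂(α) z^α, where f̂(α) = ∫_{𝕋ⁿ} f(z) conj(z^α) dz with dz the normalized Haar measure on 𝕋ⁿ. -/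
/-!
Write `F` for the Fourier projection onto the span `E` of the characters in a finite set `S`, and
`D = ∑_{α ∈ S} z^α` for the Dirichlet kernel.

* `F f = f * D` is a convolution operator, so `‖F‖ ≤ ∫ |D|`, and testing on the continuous functions
  `D / (|D| + ε)`, evaluated at the identity, gives equality (`norm_fourierProj`).
* `F` is minimal (`norm_fourierProj_le_norm_of_projection`): if `Q` is any bounded projection onto
  `E` and `T_y f (x) = f (x y)`, then `∫ T_y⁻¹ Q T_y dy = F` (`averageCLM_eq_fourierProj`).
  On a character this is the orthogonality of characters, and the characters span a dense subspace
  by Stone–Weierstrass. Since translations are isometries, `‖F‖ ≤ ‖Q‖`.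
* For the box `S = I_d` the kernel is a product of one-dimensional Dirichlet kernels, and Haar
  measure is a product measure, so `∫ |D|` is the product of the Lebesgue constants
  (`integral_norm_dirichletKernel`).
-/

open MeasureTheory

/-- The character `z ↦ z^α` on the `n`-dimensional torus, as a continuous map. -/
noncomputable def torusChar (n : ℕ) (α : Fin n → ℤ) : C((Fin n → Circle), ℂ) :=
  ⟨fun z => ∏ j, ((z j ^ α j : Circle) : ℂ), by
    refine continuous_finset_prod _ fun j _ => ?_
    exact continuous_subtype_val.comp ((continuous_apply j).zpow (α j))⟩

/-- The `d`-th Lebesgue constant. -/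
noncomputable def lebesgueConstant (d : ℕ) : ℝ :=
  (1 / (2 * Real.pi)) *
    ∫ t in (0 : ℝ)..(2 * Real.pi),
      ‖∑ k ∈ Finset.Icc (-(d : ℤ)) (d : ℤ), Complex.exp ((k : ℂ) * (t : ℂ) * Complex.I)‖

/-! ### Characters of the torus -/

section Characters

variable {n : ℕ}

lemma torusChar_apply (α : Fin n → ℤ) (z : Fin n → Circle) :
    torusChar n α z = ∏ j, ((z j ^ α j : Circle) : ℂ) := rfl

lemma torusChar_mul (α : Fin n → ℤ) (x y : Fin n → Circle) :
    torusChar n α (x * y) = torusChar n α x * torusChar n α y := by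
  simp [torusChar_apply, mul_zpow, Finset.prod_mul_distrib]

lemma torusChar_one (α : Fin n → ℤ) : torusChar n α 1 = 1 := by
  simp [torusChar_apply]

lemma norm_torusChar (α : Fin n → ℤ) (x : Fin n → Circle) : ‖torusChar n α x‖ = 1 := by
  rw [torusChar_apply, norm_prod]
  exact Finset.prod_eq_one fun j _ => Circle.norm_coe _

lemma torusChar_inv (α : Fin n → ℤ) (x : Fin n → Circle) :
    torusChar n α x⁻¹ = (starRingEnd ℂ) (torusChar n α x) := by
  simp only [torusChar_apply, map_prod, ← Circle.coe_inv_eq_conj, Pi.inv_apply, inv_zpow]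

lemma torusChar_add (α β : Fin n → ℤ) :
    torusChar n (α + β) = torusChar n α * torusChar n β := by
  ext z
  simp only [ContinuousMap.mul_apply, torusChar_apply, ← Finset.prod_mul_distrib, Pi.add_apply,
    zpow_add, Circle.coe_mul]

lemma torusChar_zero : torusChar n 0 = 1 := by
  ext z
  simp [torusChar_apply]

lemma torusChar_neg (α : Fin n → ℤ) : torusChar n (-α) = star (torusChar n α) := by
  ext z
  rw [ContinuousMap.star_apply]
  change _ = (starRingEnd ℂ) _
  rw [← torusChar_inv]
  simp [torusChar_apply]

lemma exists_torusChar_ne_one {γ : Fin n → ℤ} (hγ : γ ≠ 0) :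
    ∃ g : Fin n → Circle, torusChar n γ g ≠ 1 := by
  obtain ⟨j, hj⟩ := Function.ne_iff.1 hγ
  -- the `j`-th coordinate is chosen so that its `γ j`-th power is `exp (π i) = -1`
  refine ⟨Pi.mulSingle j (Circle.exp (Real.pi / γ j)), ?_⟩
  have h0 : (γ j : ℝ) ≠ 0 := by exact_mod_cast hj
  rw [torusChar_apply, Finset.prod_eq_single j]
  · rw [Pi.mulSingle_eq_same, ← Circle.exp_zsmul, zsmul_eq_mul, mul_div_cancel₀ _ h0,
      Circle.coe_exp, Complex.exp_pi_mul_I]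
    norm_num
  · intro b _ hb
    simp [Pi.mulSingle_eq_of_ne hb]
  · simp

/-- Stone–Weierstrass: the trigonometric polynomials are dense in `C(𝕋ⁿ)`. -/
lemma dense_span_torusChar :
    Dense (Submodule.span ℂ (Set.range (torusChar n)) : Set C((Fin n → Circle), ℂ)) := by
  have hone : (1 : C((Fin n → Circle), ℂ)) ∈ Set.range (torusChar n) := ⟨0, torusChar_zero⟩
  let A : StarSubalgebra ℂ C((Fin n → Circle), ℂ) :=
    { toSubalgebra := Algebra.adjoin ℂ (Set.range (torusChar n))
      star_mem' := by
        change Algebra.adjoin ℂ (Set.range (torusChar n)) ≤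
          star (Algebra.adjoin ℂ (Set.range (torusChar n)))
        refine Algebra.adjoin_le ?_
        rintro - ⟨α, rfl⟩
        exact Algebra.subset_adjoin ⟨-α, torusChar_neg α⟩ }
  have hspan : Subalgebra.toSubmodule A.toSubalgebra =
      Submodule.span ℂ (Set.range (torusChar n)) := by
    refine Algebra.adjoin_eq_span_of_subset (R := ℂ) ?_
    refine Set.Subset.trans ?_ Submodule.subset_span
    intro x hx
    refine Submonoid.closure_induction (fun _ => id) hone ?_ hx
    rintro - - - - ⟨α, rfl⟩ ⟨β, rfl⟩
    exact ⟨α + β, torusChar_add α β⟩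
  have hsep : A.SeparatesPoints := by
    intro x y hxy
    obtain ⟨j, hj⟩ := Function.ne_iff.1 hxy
    refine ⟨_, ⟨torusChar n (Pi.single j 1), Algebra.subset_adjoin ⟨_, rfl⟩, rfl⟩, ?_⟩
    have key : ∀ z : Fin n → Circle, torusChar n (Pi.single j 1) z = z j := by
      intro z
      rw [torusChar_apply, Finset.prod_eq_single j]
      · simp
      · intro b _ hb
        simp [Pi.single_eq_of_ne hb]
      · simp
    simpa [key, Circle.ext_iff] using hj
  have htop := ContinuousMap.starSubalgebra_topologicalClosure_eq_top_of_separatesPoints A hsep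
  rw [← hspan]
  rw [dense_iff_closure_eq]
  exact congrArg (fun B : StarSubalgebra ℂ C((Fin n → Circle), ℂ) =>
    (B : Set C((Fin n → Circle), ℂ))) htop

/-! ### Dirichlet kernels -/

/-- The Dirichlet kernel `∑_{α ∈ S} z^α`. -/
noncomputable def dirichletKernel (S : Finset (Fin n → ℤ)) : C((Fin n → Circle), ℂ) :=
  ∑ α ∈ S, torusChar n α

lemma dirichletKernel_apply (S : Finset (Fin n → ℤ)) (z : Fin n → Circle) :
    dirichletKernel S z = ∑ α ∈ S, torusChar n α z := by
  simp [dirichletKernel, ContinuousMap.sum_apply]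

lemma dirichletKernel_box (n : ℕ) (d : Fin n → ℕ) (z : Fin n → Circle) :
    dirichletKernel (Fintype.piFinset fun j => Finset.Icc (-(d j : ℤ)) (d j : ℤ)) z =
      ∏ j, ∑ k ∈ Finset.Icc (-(d j : ℤ)) (d j : ℤ), ((z j ^ k : Circle) : ℂ) := by
  rw [dirichletKernel_apply, Finset.prod_univ_sum]
  rfl

/-! ### Translations -/

/-- The translate `x ↦ f (x * y)` of a continuous function. -/
noncomputable def torusTranslate (y : Fin n → Circle) (f : C((Fin n → Circle), ℂ)) :
    C((Fin n → Circle), ℂ) :=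
  ⟨fun x => f (x * y), by fun_prop⟩

lemma continuous_torusTranslate (f : C((Fin n → Circle), ℂ)) :
    Continuous fun y => torusTranslate y f :=
  ContinuousMap.continuous_of_continuous_uncurry _ (by
    change Continuous fun p : (Fin n → Circle) × (Fin n → Circle) => f (p.2 * p.1)
    fun_prop)

lemma norm_torusTranslate_le (y : Fin n → Circle) (f : C((Fin n → Circle), ℂ)) :
    ‖torusTranslate y f‖ ≤ ‖f‖ :=
  (ContinuousMap.norm_le _ (norm_nonneg f)).2 fun x => f.norm_coe_le_norm (x * y)

lemma torusTranslate_torusChar (y : Fin n → Circle) (β : Fin n → ℤ) :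
    torusTranslate y (torusChar n β) = torusChar n β y • torusChar n β := by
  ext x
  change torusChar n β (x * y) = torusChar n β y * torusChar n β x
  rw [torusChar_mul, mul_comm]

lemma continuous_conjugate (Q : C((Fin n → Circle), ℂ) →L[ℂ] C((Fin n → Circle), ℂ))
    (f : C((Fin n → Circle), ℂ)) (x : Fin n → Circle) :
    Continuous fun y => Q (torusTranslate y f) (x * y⁻¹) := by
  have h1 : Continuous fun y => Q (torusTranslate y f) :=
    Q.continuous.comp (continuous_torusTranslate f)
  exact h1.eval (by fun_prop)

lemma norm_conjugate_le (Q : C((Fin n → Circle), ℂ) →L[ℂ] C((Fin n → Circle), ℂ))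
    (f : C((Fin n → Circle), ℂ)) (x y : Fin n → Circle) :
    ‖Q (torusTranslate y f) (x * y⁻¹)‖ ≤ ‖Q‖ * ‖f‖ :=
  calc ‖Q (torusTranslate y f) (x * y⁻¹)‖
      ≤ ‖Q (torusTranslate y f)‖ := ContinuousMap.norm_coe_le_norm _ _
    _ ≤ ‖Q‖ * ‖torusTranslate y f‖ := Q.le_opNorm _
    _ ≤ ‖Q‖ * ‖f‖ := by gcongr; exact norm_torusTranslate_le y f

end Characters

/-! ### The Fourier projection -/

section Haar

variable {n : ℕ} [MeasurableSpace (Fin n → Circle)] [BorelSpace (Fin n → Circle)]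
    (μ : Measure (Fin n → Circle)) [μ.IsHaarMeasure]

lemma continuous_integrable {f : (Fin n → Circle) → ℂ} (hf : Continuous f) : Integrable f μ :=
  hf.integrable_of_hasCompactSupport (HasCompactSupport.of_compactSpace f)

lemma integral_torusChar {γ : Fin n → ℤ} (hγ : γ ≠ 0) : ∫ z, torusChar n γ z ∂μ = 0 := by
  obtain ⟨g, hg⟩ := exists_torusChar_ne_one hγ
  have h := integral_mul_left_eq_self (μ := μ) (fun z => torusChar n γ z) g
  simp only [torusChar_mul, integral_const_mul] at h
  have : (torusChar n γ g - 1) * ∫ z, torusChar n γ z ∂μ = 0 := by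
    rw [sub_mul, h, one_mul, sub_self]
  exact (mul_eq_zero.1 this).resolve_left (sub_ne_zero.2 hg)

variable [IsProbabilityMeasure μ]

lemma integral_torusChar_mul_conj (α β : Fin n → ℤ) :
    ∫ z, torusChar n α z * (starRingEnd ℂ) (torusChar n β z) ∂μ = if α = β then 1 else 0 := by
  have h : ∀ z, torusChar n α z * (starRingEnd ℂ) (torusChar n β z) =
      torusChar n (α - β) z := by
    intro z
    rw [sub_eq_add_neg, torusChar_add, torusChar_neg]
    rfl
  simp only [h]
  split_ifs with hab
  · simp [hab, torusChar_zero]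
  · exact integral_torusChar μ (sub_ne_zero.2 hab)

/-- The Fourier coefficient `f ↦ f̂(α)` as a bounded functional on `C(𝕋ⁿ)`. -/
noncomputable def fourierCoeffCLM (α : Fin n → ℤ) : C((Fin n → Circle), ℂ) →L[ℂ] ℂ :=
  LinearMap.mkContinuous
    { toFun := fun f => ∫ z, f z * (starRingEnd ℂ) (torusChar n α z) ∂μ
      map_add' := fun f g => by
        simp only [ContinuousMap.add_apply, add_mul]
        exact integral_add (continuous_integrable μ (by fun_prop))
          (continuous_integrable μ (by fun_prop))
      map_smul' := fun c f => by
        simp only [ContinuousMap.smul_apply, smul_eq_mul, mul_assoc, integral_const_mul,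
          RingHom.id_apply] }
    1 (fun f => by
      refine (norm_integral_le_of_norm_le_const (C := ‖f‖)
        (Filter.Eventually.of_forall fun z => ?_)).trans (by simp)
      simpa [norm_torusChar] using f.norm_coe_le_norm z)

lemma fourierCoeffCLM_apply (α : Fin n → ℤ) (f : C((Fin n → Circle), ℂ)) :
    fourierCoeffCLM μ α f = ∫ z, f z * (starRingEnd ℂ) (torusChar n α z) ∂μ := rfl

/-- The Fourier projection `f ↦ ∑_{α ∈ S} f̂(α) z^α` for a finite set `S` of frequencies. -/
noncomputable def fourierProj (S : Finset (Fin n → ℤ)) :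
    C((Fin n → Circle), ℂ) →L[ℂ] C((Fin n → Circle), ℂ) :=
  ∑ α ∈ S, (fourierCoeffCLM μ α).smulRight (torusChar n α)

lemma fourierProj_apply (S : Finset (Fin n → ℤ)) (f : C((Fin n → Circle), ℂ)) :
    fourierProj μ S f =
      ∑ α ∈ S, (∫ z, f z * (starRingEnd ℂ) (torusChar n α z) ∂μ) • torusChar n α := by
  simp [fourierProj, fourierCoeffCLM_apply]

lemma fourierProj_torusChar (S : Finset (Fin n → ℤ)) (β : Fin n → ℤ) :
    fourierProj μ S (torusChar n β) = if β ∈ S then torusChar n β else 0 := by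
  rw [fourierProj_apply]
  simp only [integral_torusChar_mul_conj, ite_smul, one_smul, zero_smul, Finset.sum_ite_eq]

lemma fourierProj_mem (S : Finset (Fin n → ℤ)) (f : C((Fin n → Circle), ℂ)) :
    fourierProj μ S f ∈ Submodule.span ℂ (torusChar n '' (S : Set (Fin n → ℤ))) := by
  rw [fourierProj_apply]
  exact Submodule.sum_mem _ fun α hα =>
    Submodule.smul_mem _ _ (Submodule.subset_span ⟨α, hα, rfl⟩)

lemma fourierProj_eq_self (S : Finset (Fin n → ℤ)) {f : C((Fin n → Circle), ℂ)}
    (hf : f ∈ Submodule.span ℂ (torusChar n '' (S : Set (Fin n → ℤ)))) :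
    fourierProj μ S f = f := by
  induction hf using Submodule.span_induction with
  | mem x hx =>
    obtain ⟨α, hα, rfl⟩ := hx
    rw [fourierProj_torusChar, if_pos (by exact_mod_cast hα)]
  | zero => simp
  | add x y _ _ hx hy => rw [map_add, hx, hy]
  | smul a x _ hx => rw [map_smul, hx]

/-- The Fourier projection is convolution with the Dirichlet kernel. -/
lemma fourierProj_eq_conv (S : Finset (Fin n → ℤ)) (f : C((Fin n → Circle), ℂ))
    (x : Fin n → Circle) :
    fourierProj μ S f x = ∫ z, f z * dirichletKernel S (x * z⁻¹) ∂μ := by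
  rw [fourierProj_apply]
  simp only [dirichletKernel_apply, Finset.mul_sum, ContinuousMap.sum_apply,
    ContinuousMap.smul_apply, smul_eq_mul]
  rw [integral_finsetSum _ fun α _ => continuous_integrable μ (by fun_prop)]
  refine Finset.sum_congr rfl fun α _ => ?_
  rw [← integral_mul_const]
  refine integral_congr_ae (Filter.Eventually.of_forall fun z => ?_)
  simp only [torusChar_mul, torusChar_inv]
  ring

lemma norm_fourierProj_le (S : Finset (Fin n → ℤ)) :
    ‖fourierProj μ S‖ ≤ ∫ z, ‖dirichletKernel S z‖ ∂μ := by
  have h0 : 0 ≤ ∫ z, ‖dirichletKernel S z‖ ∂μ := integral_nonneg fun z => norm_nonneg _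
  refine ContinuousLinearMap.opNorm_le_bound _ h0 fun f => ?_
  refine (ContinuousMap.norm_le _ (by positivity)).2 fun x => ?_
  rw [fourierProj_eq_conv]
  calc ‖∫ z, f z * dirichletKernel S (x * z⁻¹) ∂μ‖
      ≤ ∫ z, ‖f‖ * ‖dirichletKernel S (x * z⁻¹)‖ ∂μ := by
        refine norm_integral_le_of_norm_le
          ((continuous_integrable μ (by fun_prop)).norm.const_mul _)
          (Filter.Eventually.of_forall fun z => ?_)
        rw [norm_mul]
        gcongr
        exact f.norm_coe_le_norm z
    _ = ‖f‖ * ∫ z, ‖dirichletKernel S z‖ ∂μ := by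
        rw [integral_const_mul]
        congr 1
        rw [← integral_div_left_eq_self (fun z => ‖dirichletKernel S z‖) μ x]
        simp only [div_eq_mul_inv]
    _ = _ := mul_comm _ _

/-- Testing on the continuous functions `D / (‖D‖ + ε)`, which approximate the sign of the
Dirichlet kernel `D`, shows that the `L¹`-norm of `D` is a lower bound for the norm. -/
lemma le_norm_fourierProj (S : Finset (Fin n → ℤ)) :
    ∫ z, ‖dirichletKernel S z‖ ∂μ ≤ ‖fourierProj μ S‖ := by
  refine le_of_forall_pos_le_add fun ε hε => ?_
  set D := dirichletKernel S
  have hpos : ∀ z, 0 < ‖D z‖ + ε := fun z => by positivity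
  let f : C((Fin n → Circle), ℂ) :=
    ⟨fun z => D z * (((‖D z‖ + ε)⁻¹ : ℝ) : ℂ), by
      refine D.continuous.mul (Complex.continuous_ofReal.comp ?_)
      exact (D.continuous.norm.add continuous_const).inv₀ fun z => (hpos z).ne'⟩
  have hfz : ∀ z, f z = D z * (((‖D z‖ + ε)⁻¹ : ℝ) : ℂ) := fun z => rfl
  have hf : ‖f‖ ≤ 1 := by
    refine (ContinuousMap.norm_le _ zero_le_one).2 fun z => ?_
    rw [hfz, norm_mul, Complex.norm_real, Real.norm_of_nonneg (inv_nonneg.2 (hpos z).le),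
      ← div_eq_mul_inv, div_le_one (hpos z)]
    linarith
  have hD : ∀ z, D (1 * z⁻¹) = (starRingEnd ℂ) (D z) := by
    intro z
    simp only [D, one_mul, dirichletKernel_apply, map_sum, torusChar_inv]
  have hval : fourierProj μ S f 1 = ((∫ z, ‖D z‖ ^ 2 * (‖D z‖ + ε)⁻¹ ∂μ : ℝ) : ℂ) := by
    rw [fourierProj_eq_conv, ← integral_complex_ofReal]
    refine integral_congr_ae (Filter.Eventually.of_forall fun z => ?_)
    change f z * D (1 * z⁻¹) = _
    rw [hD, hfz, mul_right_comm, Complex.mul_conj, Complex.normSq_eq_norm_sq]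
    push_cast
    rfl
  have hint : Integrable (fun z => ‖D z‖) μ :=
    (continuous_integrable μ D.continuous).norm
  have hcont : Continuous fun z => ‖D z‖ ^ 2 * (‖D z‖ + ε)⁻¹ :=
    (D.continuous.norm.pow 2).mul
      ((D.continuous.norm.add continuous_const).inv₀ fun z => (hpos z).ne')
  have hint2 : Integrable (fun z => ‖D z‖ ^ 2 * (‖D z‖ + ε)⁻¹) μ :=
    hcont.integrable_of_hasCompactSupport (HasCompactSupport.of_compactSpace _)
  calc ∫ z, ‖D z‖ ∂μ ≤ ∫ z, (‖D z‖ ^ 2 * (‖D z‖ + ε)⁻¹ + ε) ∂μ := by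
        refine integral_mono hint (hint2.add (integrable_const ε)) fun z => ?_
        have h := hpos z
        have h1 : ‖D z‖ * (‖D z‖ + ε)⁻¹ ≤ 1 := by
          rw [← div_eq_mul_inv, div_le_one h]
          linarith
        have h2 : (‖D z‖ + ε) * (‖D z‖ + ε)⁻¹ = 1 := mul_inv_cancel₀ h.ne'
        change ‖D z‖ ≤ ‖D z‖ ^ 2 * (‖D z‖ + ε)⁻¹ + ε
        have h3 : ‖D z‖ = ‖D z‖ ^ 2 * (‖D z‖ + ε)⁻¹ + ε * (‖D z‖ * (‖D z‖ + ε)⁻¹) := by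
          linear_combination (-‖D z‖) * h2
        have h4 := mul_le_mul_of_nonneg_left h1 hε.le
        linarith
    _ = (∫ z, ‖D z‖ ^ 2 * (‖D z‖ + ε)⁻¹ ∂μ) + ε := by
        rw [integral_add hint2 (integrable_const ε)]
        simp
    _ ≤ ‖fourierProj μ S‖ + ε := by
        gcongr
        calc ∫ z, ‖D z‖ ^ 2 * (‖D z‖ + ε)⁻¹ ∂μ
            ≤ ‖((∫ z, ‖D z‖ ^ 2 * (‖D z‖ + ε)⁻¹ ∂μ : ℝ) : ℂ)‖ := by
              rw [Complex.norm_real]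
              exact le_abs_self _
          _ = ‖fourierProj μ S f 1‖ := by rw [hval]
          _ ≤ ‖fourierProj μ S f‖ := ContinuousMap.norm_coe_le_norm _ _
          _ ≤ ‖fourierProj μ S‖ * ‖f‖ := ContinuousLinearMap.le_opNorm _ _
          _ ≤ ‖fourierProj μ S‖ := mul_le_of_le_one_right (norm_nonneg _) hf

lemma norm_fourierProj (S : Finset (Fin n → ℤ)) :
    ‖fourierProj μ S‖ = ∫ z, ‖dirichletKernel S z‖ ∂μ :=
  le_antisymm (norm_fourierProj_le μ S) (le_norm_fourierProj μ S)

/-! ### Averaging projections over translations -/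

/-- The value at `x` of the average over `𝕋ⁿ` of the conjugates of `Q` by translations. -/
noncomputable def averageCLM (Q : C((Fin n → Circle), ℂ) →L[ℂ] C((Fin n → Circle), ℂ))
    (x : Fin n → Circle) : C((Fin n → Circle), ℂ) →L[ℂ] ℂ :=
  LinearMap.mkContinuous
    { toFun := fun f => ∫ y, Q (torusTranslate y f) (x * y⁻¹) ∂μ
      map_add' := fun f g => by
        rw [← integral_add (continuous_integrable μ (continuous_conjugate Q f x))
          (continuous_integrable μ (continuous_conjugate Q g x))]
        refine integral_congr_ae (Filter.Eventually.of_forall fun y => ?_)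
        have : torusTranslate y (f + g) = torusTranslate y f + torusTranslate y g := rfl
        simp only [this, map_add, ContinuousMap.add_apply]
      map_smul' := fun c f => by
        rw [RingHom.id_apply, smul_eq_mul, ← integral_const_mul]
        refine integral_congr_ae (Filter.Eventually.of_forall fun y => ?_)
        have : torusTranslate y (c • f) = c • torusTranslate y f := rfl
        simp only [this, map_smul, ContinuousMap.smul_apply, smul_eq_mul] }
    ‖Q‖ (fun f => by
      refine (norm_integral_le_of_norm_le_const (C := ‖Q‖ * ‖f‖)
        (Filter.Eventually.of_forall fun y => norm_conjugate_le Q f x y)).trans (by simp))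

lemma averageCLM_apply (Q : C((Fin n → Circle), ℂ) →L[ℂ] C((Fin n → Circle), ℂ))
    (x : Fin n → Circle) (f : C((Fin n → Circle), ℂ)) :
    averageCLM μ Q x f = ∫ y, Q (torusTranslate y f) (x * y⁻¹) ∂μ := rfl

lemma norm_averageCLM_le (Q : C((Fin n → Circle), ℂ) →L[ℂ] C((Fin n → Circle), ℂ))
    (x : Fin n → Circle) : ‖averageCLM μ Q x‖ ≤ ‖Q‖ :=
  LinearMap.mkContinuous_norm_le _ (norm_nonneg _) _

/-- If `g` has only frequencies in `S` and `β ∉ S`, then the convolution of `z^β` and `g`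
vanishes. -/
lemma integral_torusChar_mul_eq_zero {S : Finset (Fin n → ℤ)} {β : Fin n → ℤ} (hβ : β ∉ S)
    {g : C((Fin n → Circle), ℂ)}
    (hg : g ∈ Submodule.span ℂ (torusChar n '' (S : Set (Fin n → ℤ)))) (x : Fin n → Circle) :
    ∫ y, torusChar n β y * g (x * y⁻¹) ∂μ = 0 := by
  induction hg using Submodule.span_induction with
  | mem g hg =>
    obtain ⟨α, hα, rfl⟩ := hg
    have hne : β ≠ α := by
      rintro rfl
      exact hβ (by exact_mod_cast hα)
    simp only [torusChar_mul, torusChar_inv, mul_left_comm _ (torusChar n α x)]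
    rw [integral_const_mul, integral_torusChar_mul_conj, if_neg hne, mul_zero]
  | zero => simp
  | add g h _ _ hg hh =>
    simp only [ContinuousMap.add_apply, mul_add]
    rw [integral_add (continuous_integrable μ (by fun_prop))
      (continuous_integrable μ (by fun_prop)), hg, hh, add_zero]
  | smul a g _ hg =>
    simp only [ContinuousMap.smul_apply, smul_eq_mul, mul_left_comm _ a]
    rw [integral_const_mul, hg, mul_zero]

/-- Averaging any projection onto the span of the characters in `S` over translations yields the
Fourier projection: the two agree on characters, whose span is dense. -/
lemma averageCLM_eq_fourierProj {S : Finset (Fin n → ℤ)}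
    {Q : C((Fin n → Circle), ℂ) →L[ℂ] C((Fin n → Circle), ℂ)}
    (hQ : ∀ f, Q f ∈ Submodule.span ℂ (torusChar n '' (S : Set (Fin n → ℤ))))
    (hQ' : ∀ f ∈ Submodule.span ℂ (torusChar n '' (S : Set (Fin n → ℤ))), Q f = f)
    (x : Fin n → Circle) :
    averageCLM μ Q x = (ContinuousMap.evalCLM ℂ x).comp (fourierProj μ S) := by
  refine ContinuousLinearMap.ext_on dense_span_torusChar ?_
  rintro - ⟨β, rfl⟩
  rw [averageCLM_apply, ContinuousLinearMap.comp_apply, fourierProj_torusChar]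
  simp only [torusTranslate_torusChar, map_smul, ContinuousMap.smul_apply, smul_eq_mul]
  by_cases hβ : β ∈ S
  · rw [if_pos hβ, hQ' _ (Submodule.subset_span ⟨β, by exact_mod_cast hβ, rfl⟩)]
    have : ∀ y, torusChar n β y * torusChar n β (x * y⁻¹) = torusChar n β x := by
      intro y
      rw [← torusChar_mul]
      congr 1
      rw [mul_comm x, mul_inv_cancel_left]
    simp [this, ContinuousMap.evalCLM]
  · rw [if_neg hβ, map_zero]
    exact integral_torusChar_mul_eq_zero μ hβ (hQ _) x

lemma norm_fourierProj_le_norm_of_projection {S : Finset (Fin n → ℤ)}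
    {Q : C((Fin n → Circle), ℂ) →L[ℂ] C((Fin n → Circle), ℂ)}
    (hQ : ∀ f, Q f ∈ Submodule.span ℂ (torusChar n '' (S : Set (Fin n → ℤ))))
    (hQ' : ∀ f ∈ Submodule.span ℂ (torusChar n '' (S : Set (Fin n → ℤ))), Q f = f) :
    ‖fourierProj μ S‖ ≤ ‖Q‖ := by
  refine ContinuousLinearMap.opNorm_le_bound _ (norm_nonneg _) fun f => ?_
  refine (ContinuousMap.norm_le _ (by positivity)).2 fun x => ?_
  have h : fourierProj μ S f x = averageCLM μ Q x f := by
    rw [averageCLM_eq_fourierProj μ hQ hQ' x]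
    rfl
  rw [h]
  exact (ContinuousLinearMap.le_opNorm _ _).trans
    (mul_le_mul_of_nonneg_right (norm_averageCLM_le μ Q x) (norm_nonneg f))

end Haar

/-! ### The `L¹`-norm of the Dirichlet kernel -/

section LebesgueConstants

/-- The circle carries a Haar probability measure, transported from `AddCircle (2 * π)`, for which
the `L¹`-norms of the one-dimensional Dirichlet kernels are the Lebesgue constants. -/
lemma exists_circle_haar [MeasurableSpace Circle] [BorelSpace Circle] :
    ∃ ν : Measure Circle, ν.IsHaarMeasure ∧ IsProbabilityMeasure ν ∧
      ∀ d : ℕ, ∫ z : Circle, ‖∑ k ∈ Finset.Icc (-(d : ℤ)) (d : ℤ), ((z ^ k : Circle) : ℂ)‖ ∂ν =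
        lebesgueConstant d := by
  have : Fact (0 < 2 * Real.pi) := ⟨Real.two_pi_pos⟩
  let φ : AddCircle (2 * Real.pi) → Circle := AddCircle.toCircle
  have hφc : Continuous φ := AddCircle.continuous_toCircle
  have hφ : Measurable φ := hφc.measurable
  have hφt : ∀ t : ℝ, φ t = Circle.exp t := by
    intro t
    change AddCircle.toCircle (t : AddCircle (2 * Real.pi)) = _
    rw [AddCircle.toCircle_apply_mk, div_self Real.two_pi_pos.ne', one_mul]
  let ν : Measure Circle := (AddCircle.haarAddCircle (T := 2 * Real.pi)).map φ
  have hprob : IsProbabilityMeasure ν := Measure.isProbabilityMeasure_map hφ.aemeasurable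
  have hinv : ν.IsMulLeftInvariant := by
    refine ⟨fun g => ?_⟩
    obtain ⟨t, ht⟩ := Circle.exp_surjective g
    rw [← hφt] at ht
    subst ht
    rw [Measure.map_map (measurable_const_mul _) hφ]
    have : (fun z => φ t * z) ∘ φ = φ ∘ fun s => (t : AddCircle (2 * Real.pi)) + s := by
      ext s
      simp [φ, AddCircle.toCircle_add]
    rw [this, ← Measure.map_map hφ (measurable_const_add _), map_add_left_eq_self]
  refine ⟨ν, ?_, hprob, fun d => ?_⟩
  · exact Measure.isHaarMeasure_of_isCompact_nonempty_interior ν Set.univ isCompact_univ (by simp)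
      (by simp) (by simp)
  · have hc : Continuous fun z : Circle =>
        ‖∑ k ∈ Finset.Icc (-(d : ℤ)) (d : ℤ), ((z ^ k : Circle) : ℂ)‖ := by
      refine Continuous.norm (continuous_finsetSum _ fun k _ => ?_)
      exact continuous_subtype_val.comp (continuous_id.zpow k)
    rw [integral_map hφ.aemeasurable hc.aestronglyMeasurable]
    rw [AddCircle.integral_haarAddCircle, lebesgueConstant,
      ← AddCircle.intervalIntegral_preimage (2 * Real.pi) 0, zero_add, smul_eq_mul, one_div]
    simp only [hφt, ← Circle.exp_zsmul, Circle.coe_exp]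
    simp

/-- The `L¹`-norm of the Dirichlet kernel of a box factors, since Haar measure on `𝕋ⁿ` is the
product of the Haar measures of the factors. -/
lemma integral_norm_dirichletKernel (n : ℕ) (d : Fin n → ℕ)
    [m : MeasurableSpace (Fin n → Circle)] [BorelSpace (Fin n → Circle)]
    (μ : Measure (Fin n → Circle)) [μ.IsHaarMeasure] [IsProbabilityMeasure μ] :
    ∫ z, ‖dirichletKernel
        (Fintype.piFinset fun j => Finset.Icc (-(d j : ℤ)) (d j : ℤ)) z‖ ∂μ =
      ∏ j, lebesgueConstant (d j) := by
  let mC : MeasurableSpace Circle := borel Circle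
  have : BorelSpace Circle := ⟨rfl⟩
  -- a Borel σ-algebra on `𝕋ⁿ` is necessarily the product σ-algebra, as `Circle` is second countable
  have hm : m = MeasurableSpace.pi := by
    rw [BorelSpace.measurable_eq (α := Fin n → Circle)]
    exact (Pi.borelSpace (X := fun _ : Fin n => Circle)).measurable_eq.symm
  subst hm
  obtain ⟨ν, hν, hp, hL⟩ := exists_circle_haar
  have hμ : μ = Measure.pi fun _ => ν :=
    Measure.isHaarMeasure_eq_of_isProbabilityMeasure _ _
  rw [hμ]
  simp only [dirichletKernel_box, norm_prod]
  rw [integral_fintype_prod_eq_prod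
    (fun j (w : Circle) => ‖∑ k ∈ Finset.Icc (-(d j : ℤ)) (d j : ℤ), ((w ^ k : Circle) : ℂ)‖)]
  exact Finset.prod_congr rfl fun j _ => hL (d j)

end LebesgueConstants

/-- **Lozinski–Kharshiladze theorem on the `n`-dimensional torus.** -/
theorem stmt_3 (n : ℕ) (d : Fin n → ℕ)
    [MeasurableSpace (Fin n → Circle)] [BorelSpace (Fin n → Circle)]
    (μ : Measure (Fin n → Circle)) [μ.IsHaarMeasure] [IsProbabilityMeasure μ] :
    let Idx : Finset (Fin n → ℤ) := Fintype.piFinset fun j => Finset.Icc (-(d j : ℤ)) (d j : ℤ)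
    let E : Submodule ℂ C((Fin n → Circle), ℂ) := Submodule.span ℂ (torusChar n '' ↑Idx)
    (sInf {r : ℝ | ∃ Q : C((Fin n → Circle), ℂ) →L[ℂ] C((Fin n → Circle), ℂ),
        (∀ f, Q f ∈ E) ∧ (∀ f ∈ E, Q f = f) ∧ ‖Q‖ = r}
      = ∏ j, lebesgueConstant (d j)) ∧
    ∃ F : C((Fin n → Circle), ℂ) →L[ℂ] C((Fin n → Circle), ℂ),
      (∀ f, F f = ∑ α ∈ Idx,
        (∫ z, f z * (starRingEnd ℂ) (torusChar n α z) ∂μ) • torusChar n α) ∧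
      (∀ f, F f ∈ E) ∧ (∀ f ∈ E, F f = f) ∧
      ‖F‖ = ∏ j, lebesgueConstant (d j) := by
  intro Idx E
  have hnorm : ‖fourierProj μ Idx‖ = ∏ j, lebesgueConstant (d j) := by
    rw [norm_fourierProj]
    exact integral_norm_dirichletKernel n d μ
  refine ⟨IsLeast.csInf_eq ⟨?_, ?_⟩, fourierProj μ Idx, fourierProj_apply μ Idx,
    fourierProj_mem μ Idx, fun f hf => fourierProj_eq_self μ Idx hf, hnorm⟩
  · exact ⟨fourierProj μ Idx, fourierProj_mem μ Idx,
      fun f hf => fourierProj_eq_self μ Idx hf, hnorm⟩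
  · rintro r ⟨Q, hQ, hQ', rfl⟩
    rw [← hnorm]
    exact norm_fourierProj_le_norm_of_projection μ hQ hQ'
end

section
/- Let 𝒰_n be the compact group of n×n complex unitary matrices with Haar probability measure μ_n. Then lim_{n→∞} ∫_{𝒰_n} |tr V| dμ_n(V) = √π / 2. -/
open MeasureTheory Filter Topology
open scoped Matrix

/-!
The proof is Stein's method for `X = Re tr V`, carried out with the integration by parts formula
on the unitary group.

*Integration by parts.* Left invariance gives `E[d/ds F (exp (s A) V)] = 0` for skew-Hermitian `A`.
For the functions `F` that occur, the derivative has the form `∑ i j, A i j * d V i j`, which is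
complex linear in `A`; since the skew-Hermitian matrices span all matrices over `ℂ`, every
`E[d V i j]` vanishes (`HasLieDeriv.integral_eq_zero`).

*Consequences.* Taking `F = V a b * conj (tr V)`, `F = (V²) a b * conj (tr V²)` and
`F = V a b * f (Re tr V)`, reading off the `(a, b)` coefficient and summing over `a, b` yields
`E|tr V|² = 1`, the uniform bound `E|tr V²| ≤ 3`, and
`E[2 X f(X)] = E[f'(X)] - E[Re (tr V²) f'(X)] / n`.

*Stein's equation.* For the solution `f` of `f' - 2 x f = |x| - 1/√π` with `f 0 = 0`, the derivative
is bounded by `1/√π` (a Mills ratio estimate, `abs_steinDeriv_le`), so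
`|E|X| - 1/√π| ≤ 3 / (√π n)`.

*Conclusion.* Invariance under `V ↦ e^{iθ} V` and `∫_0^π |Re (e^{iθ} z)| dθ = 2 |z|` give
`E|tr V| = (π/2) E|X|`, which tends to `(π/2) / √π = √π / 2`.
-/

/-! ### Topology of the unitary group -/

instance compactSpace_unitaryGroup (n : ℕ) : CompactSpace (Matrix.unitaryGroup (Fin n) ℂ) := by
  suffices IsCompact ((Matrix.unitaryGroup (Fin n) ℂ : Submonoid (Matrix (Fin n) (Fin n) ℂ)) :
      Set (Matrix (Fin n) (Fin n) ℂ)) from isCompact_iff_compactSpace.1 this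
  have hK : IsCompact (Set.univ.pi fun _ : Fin n => Set.univ.pi fun _ : Fin n =>
      Metric.closedBall (0 : ℂ) 1) :=
    isCompact_univ_pi fun _ => isCompact_univ_pi fun _ => isCompact_closedBall 0 1
  refine IsCompact.of_isClosed_subset hK ?_ ?_
  · have : ((Matrix.unitaryGroup (Fin n) ℂ : Submonoid (Matrix (Fin n) (Fin n) ℂ)) :
        Set (Matrix (Fin n) (Fin n) ℂ)) = {A | A * star A = 1} := by
      ext A; exact Matrix.mem_unitaryGroup_iff
    rw [this]
    exact isClosed_eq (by fun_prop) continuous_const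
  · intro A hA i _ j _
    simpa using entry_norm_bound_of_unitary hA i j

instance secondCountable_unitaryGroup (n : ℕ) :
    SecondCountableTopology (Matrix.unitaryGroup (Fin n) ℂ) := by
  have : SecondCountableTopology (Matrix (Fin n) (Fin n) ℂ) :=
    inferInstanceAs (SecondCountableTopology (Fin n → Fin n → ℂ))
  exact TopologicalSpace.Subtype.secondCountableTopology _

lemma Continuous.integrable_of_compact {G E : Type*} [TopologicalSpace G] [CompactSpace G]
    [SecondCountableTopology G] [MeasurableSpace G] [BorelSpace G] [NormedAddCommGroup E]
    {μ : Measure G} [IsFiniteMeasure μ] {f : G → E} (hf : Continuous f) : Integrable f μ := by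
  rw [← integrableOn_univ]
  exact hf.continuousOn.integrableOn_compact' isCompact_univ MeasurableSet.univ

/-! ### Integration by parts on the unitary group -/

section LieDerivative

variable {n : ℕ}

/-- A one-parameter subgroup `U` of the unitary group with infinitesimal generator `A`. The
derivative is recorded entrywise, so that no norm on matrices has to be chosen. -/
structure IsOneParam (U : ℝ → Matrix.unitaryGroup (Fin n) ℂ) (A : Matrix (Fin n) (Fin n) ℂ) :
    Prop where
  zero : U 0 = 1
  add : ∀ s t, U (s + t) = U s * U t
  deriv : ∀ i j, HasDerivAt (fun s => (U s : Matrix (Fin n) (Fin n) ℂ) i j) (A i j) 0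

open scoped Matrix.Norms.Operator in
lemma exists_isOneParam {A : Matrix (Fin n) (Fin n) ℂ} (hA : Aᴴ = -A) :
    ∃ U : ℝ → Matrix.unitaryGroup (Fin n) ℂ, IsOneParam U A := by
  have hmem : ∀ s : ℝ, NormedSpace.exp (s • A) ∈ Matrix.unitaryGroup (Fin n) ℂ := by
    intro s
    rw [Matrix.mem_unitaryGroup_iff, Matrix.star_eq_conjTranspose, ← Matrix.exp_conjTranspose,
      Matrix.conjTranspose_smul, hA, star_trivial, smul_neg,
      ← Matrix.exp_add_of_commute _ _ (Commute.refl (s • A)).neg_right, add_neg_cancel,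
      NormedSpace.exp_zero]
  refine ⟨fun s => ⟨_, hmem s⟩, ?_, ?_, ?_⟩
  · apply Subtype.ext; simp
  · intro s t
    apply Subtype.ext
    simp only [Submonoid.coe_mul, add_smul]
    exact Matrix.exp_add_of_commute _ _ (((Commute.refl A).smul_left s).smul_right t)
  · intro i j
    have h := hasDerivAt_exp_smul_const (𝕂 := ℝ) A (0 : ℝ)
    simp only [zero_smul, NormedSpace.exp_zero, one_mul] at h
    let L : Matrix (Fin n) (Fin n) ℂ →ₗ[ℝ] ℂ :=
      { toFun := fun M => M i j, map_add' := fun _ _ => rfl, map_smul' := fun _ _ => rfl }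
    exact (L.toContinuousLinearMap.hasFDerivAt (x := NormedSpace.exp ((0:ℝ) • A))).comp_hasDerivAt
      (0 : ℝ) (by simpa using h)

/-- `F` is differentiable along left translations, and `d V i j` are the coefficients of its
derivative: `d/ds F (exp (s A) V) = ∑ i j, A i j * d V i j` at `s = 0`, for every skew-Hermitian
`A`. The right-hand side is complex linear in `A`. -/
structure HasLieDeriv (F : Matrix.unitaryGroup (Fin n) ℂ → ℂ)
    (d : Matrix.unitaryGroup (Fin n) ℂ → Fin n → Fin n → ℂ) : Prop where
  cont : Continuous F
  cont_deriv : ∀ i j, Continuous fun V => d V i j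
  deriv : ∀ (A : Matrix (Fin n) (Fin n) ℂ) (U : ℝ → Matrix.unitaryGroup (Fin n) ℂ),
    Aᴴ = -A → IsOneParam U A → ∀ V,
      HasDerivAt (fun s => F (U s * V)) (∑ i, ∑ j, A i j * d V i j) 0

variable {F F₁ F₂ : Matrix.unitaryGroup (Fin n) ℂ → ℂ}
  {d d₁ d₂ : Matrix.unitaryGroup (Fin n) ℂ → Fin n → Fin n → ℂ}

lemma continuous_entry (a b : Fin n) :
    Continuous fun V : Matrix.unitaryGroup (Fin n) ℂ => (V : Matrix (Fin n) (Fin n) ℂ) a b :=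
  continuous_subtype_val.matrix_elem a b

lemma hasLieDeriv_entry (a b : Fin n) :
    HasLieDeriv (fun V => (V : Matrix (Fin n) (Fin n) ℂ) a b)
      (fun V i j => if i = a then (V : Matrix (Fin n) (Fin n) ℂ) j b else 0) where
  cont := continuous_entry a b
  cont_deriv i j := by
    by_cases h : i = a
    · simpa [h] using continuous_entry j b
    · simpa [h] using continuous_const
  deriv A U _ hU V := by
    have h : HasDerivAt (fun s => ∑ j, (U s : Matrix (Fin n) (Fin n) ℂ) a j *
        (V : Matrix (Fin n) (Fin n) ℂ) j b)
        (∑ j, A a j * (V : Matrix (Fin n) (Fin n) ℂ) j b) 0 :=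
      HasDerivAt.fun_sum fun j _ => (hU.deriv a j).mul_const _
    have e : (∑ i, ∑ j, A i j * (if i = a then (V : Matrix (Fin n) (Fin n) ℂ) j b else 0))
        = ∑ j, A a j * (V : Matrix (Fin n) (Fin n) ℂ) j b := by
      rw [Finset.sum_eq_single a]
      · simp
      · intro i _ hi; simp [hi]
      · simp
    rw [e]
    simpa [Matrix.mul_apply] using h

lemma HasLieDeriv.mul (h₁ : HasLieDeriv F₁ d₁) (h₂ : HasLieDeriv F₂ d₂) :
    HasLieDeriv (fun V => F₁ V * F₂ V) (fun V i j => d₁ V i j * F₂ V + F₁ V * d₂ V i j) where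
  cont := h₁.cont.mul h₂.cont
  cont_deriv i j := ((h₁.cont_deriv i j).mul h₂.cont).add (h₁.cont.mul (h₂.cont_deriv i j))
  deriv A U hA hU V := by
    have h := (h₁.deriv A U hA hU V).mul (h₂.deriv A U hA hU V)
    simp only [hU.zero, one_mul] at h
    refine h.congr_deriv ?_
    simp only [Finset.sum_mul, Finset.mul_sum, ← Finset.sum_add_distrib]
    refine Finset.sum_congr rfl fun i _ => Finset.sum_congr rfl fun j _ => ?_
    ring

lemma HasLieDeriv.sum {ι : Type*} {s : Finset ι} {F : ι → Matrix.unitaryGroup (Fin n) ℂ → ℂ}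
    {d : ι → Matrix.unitaryGroup (Fin n) ℂ → Fin n → Fin n → ℂ}
    (h : ∀ c ∈ s, HasLieDeriv (F c) (d c)) :
    HasLieDeriv (fun V => ∑ c ∈ s, F c V) (fun V i j => ∑ c ∈ s, d c V i j) where
  cont := continuous_finsetSum s fun c hc => (h c hc).cont
  cont_deriv i j := continuous_finsetSum s fun c hc => (h c hc).cont_deriv i j
  deriv A U hA hU V := by
    refine (HasDerivAt.fun_sum fun c hc => (h c hc).deriv A U hA hU V).congr_deriv ?_
    simp only [Finset.mul_sum]
    rw [Finset.sum_comm (s := s)]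
    exact Finset.sum_congr rfl fun i _ => Finset.sum_comm

/-- Conjugating `∑ i j, A i j * d i j` and using `Aᴴ = -A` gives a complex linear expression
in `A` again. -/
lemma HasLieDeriv.conj (h : HasLieDeriv F d) :
    HasLieDeriv (fun V => star (F V)) (fun V i j => -star (d V j i)) where
  cont := h.cont.star
  cont_deriv i j := (h.cont_deriv j i).star.neg
  deriv A U hA hU V := by
    refine (h.deriv A U hA hU V).star.congr_deriv ?_
    have hA' : ∀ i j, star (A i j) = -A j i := fun i j => by
      have := congrFun (congrFun hA j) i
      simpa using this
    simp only [star_sum, star_mul']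
    rw [Finset.sum_comm]
    refine Finset.sum_congr rfl fun i _ => Finset.sum_congr rfl fun j _ => ?_
    rw [hA']; ring

lemma HasLieDeriv.comp_re (h : HasLieDeriv F d) {f f' : ℝ → ℝ} (hf : ∀ x, HasDerivAt f (f' x) x)
    (hf' : Continuous f') :
    HasLieDeriv (fun V => ((f (F V).re : ℝ) : ℂ))
      (fun V i j => (f' (F V).re : ℂ) * ((d V i j - star (d V j i)) / 2)) where
  cont := by
    have hc : Continuous f := continuous_iff_continuousAt.2 fun x => (hf x).continuousAt
    exact Complex.continuous_ofReal.comp (hc.comp (Complex.continuous_re.comp h.cont))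
  cont_deriv i j := by
    have h1 := h.cont_deriv i j
    have h2 := h.cont_deriv j i
    have h3 := h.cont
    refine Continuous.mul (Complex.continuous_ofReal.comp
      (hf'.comp (Complex.continuous_re.comp h3))) ?_
    exact (h1.sub h2.star).div_const 2
  deriv A U hA hU V := by
    have h1 := h.deriv A U hA hU V
    have h2 := h.conj.deriv A U hA hU V
    have h3 : HasDerivAt (fun s => (F (U s * V)).re) (∑ i, ∑ j, A i j * d V i j).re 0 :=
      Complex.reCLM.hasFDerivAt.comp_hasDerivAt (0 : ℝ) h1
    have h4 := ((hf (F (U 0 * V)).re).comp (0 : ℝ) h3).ofReal_comp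
    simp only [hU.zero, one_mul] at h4
    refine h4.congr_deriv ?_
    have e := h2.unique h1.star
    have e2 : ((∑ i, ∑ j, A i j * d V i j).re : ℂ) =
        ((∑ i, ∑ j, A i j * d V i j) + ∑ i, ∑ j, A i j * -star (d V j i)) / 2 := by
      rw [e, Complex.re_eq_add_conj]; rfl
    rw [Complex.ofReal_mul, e2, ← Finset.sum_add_distrib, Finset.sum_div, Finset.mul_sum]
    refine Finset.sum_congr rfl fun i _ => ?_
    rw [← Finset.sum_add_distrib, Finset.sum_div, Finset.mul_sum]
    refine Finset.sum_congr rfl fun j _ => ?_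
    ring

variable [MeasurableSpace (Matrix.unitaryGroup (Fin n) ℂ)]
  [BorelSpace (Matrix.unitaryGroup (Fin n) ℂ)]
  {μ : Measure (Matrix.unitaryGroup (Fin n) ℂ)} [μ.IsMulLeftInvariant] [IsProbabilityMeasure μ]

lemma HasLieDeriv.integral_skew (h : HasLieDeriv F d) {A : Matrix (Fin n) (Fin n) ℂ}
    (hA : Aᴴ = -A) : ∑ i, ∑ j, A i j * ∫ V, d V i j ∂μ = 0 := by
  obtain ⟨U, hU⟩ := exists_isOneParam hA
  set D : Matrix.unitaryGroup (Fin n) ℂ → ℂ := fun V => ∑ i, ∑ j, A i j * d V i j with hD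
  have hDc : Continuous D := continuous_finsetSum _ fun i _ => continuous_finsetSum _ fun j _ =>
    continuous_const.mul (h.cont_deriv i j)
  obtain ⟨C, hC⟩ := isCompact_univ.exists_bound_of_continuousOn hDc.continuousOn
  have hderiv : ∀ V s, HasDerivAt (fun s => F (U s * V)) (D (U s * V)) s := by
    intro V s
    have h1 := h.deriv A U hA hU (U s * V)
    have h2 : HasDerivAt (fun t : ℝ => t - s) 1 s := (hasDerivAt_id s).sub_const s
    have h3 := HasDerivAt.scomp (h := fun t : ℝ => t - s) s (by simpa using h1) h2
    simp only [one_smul] at h3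
    refine h3.congr_of_eventuallyEq (Eventually.of_forall fun t => ?_)
    simp only [Function.comp]
    rw [← mul_assoc, ← hU.add, sub_add_cancel]
  have key := (hasDerivAt_integral_of_dominated_loc_of_deriv_le (μ := μ) (𝕜 := ℝ)
    (F := fun s V => F (U s * V)) (F' := fun s V => D (U s * V)) (x₀ := (0 : ℝ))
    (s := Set.univ) (bound := fun _ => C) univ_mem
    (Eventually.of_forall fun s =>
      (h.cont.comp (continuous_const.mul continuous_id)).aestronglyMeasurable)
    (h.cont.comp (continuous_const.mul continuous_id)).integrable_of_compact
    (hDc.comp (continuous_const.mul continuous_id)).aestronglyMeasurable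
    (Eventually.of_forall fun V s _ => hC _ trivial)
    (integrable_const C)
    (Eventually.of_forall fun V s _ => hderiv V s)).2
  simp only [integral_mul_left_eq_self] at key
  have h0 := key.unique (hasDerivAt_const (0 : ℝ) (∫ V, F V ∂μ))
  simp only [hD] at h0
  have hc : ∀ i j, Continuous fun V => A i j * d V i j := fun i j =>
    continuous_const.mul (h.cont_deriv i j)
  rw [integral_finsetSum _ fun i _ => (continuous_finsetSum _ fun j _ =>
    hc i j).integrable_of_compact] at h0
  rw [← h0]
  refine Finset.sum_congr rfl fun i _ => ?_
  rw [integral_finsetSum _ fun j _ => (hc i j).integrable_of_compact]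
  exact Finset.sum_congr rfl fun j _ => (integral_const_mul _ _).symm

/-- The Schwinger–Dyson equations. A complex linear functional vanishing on skew-Hermitian
matrices is zero, hence each coefficient of the derivative integrates to zero. -/
lemma HasLieDeriv.integral_eq_zero (h : HasLieDeriv F d) (a b : Fin n) :
    ∫ V, d V a b ∂μ = 0 := by
  set I : Fin n → Fin n → ℂ := fun i j => ∫ V, d V i j ∂μ with hI
  have hlin : ∀ p q (c : ℂ), ∑ i, ∑ j, (Matrix.single p q c) i j * I i j = c * I p q := by
    intro p q c
    rw [Finset.sum_eq_single p, Finset.sum_eq_single q]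
    · simp
    · intro j _ hj; simp [Ne.symm hj]
    · simp
    · intro i _ hi; simp [Ne.symm hi]
    · simp
  have h1 := h.integral_skew (μ := μ) (A := Matrix.single a b 1 - Matrix.single b a 1)
    (by simp [Matrix.conjTranspose_single])
  have h2 := h.integral_skew (μ := μ)
    (A := Matrix.single a b Complex.I + Matrix.single b a Complex.I)
    (by
      simp only [Matrix.conjTranspose_add, Matrix.conjTranspose_single, Complex.star_def,
        Complex.conj_I, ← Matrix.single_neg, neg_add]
      exact add_comm _ _)
  simp only [Matrix.sub_apply, sub_mul, Finset.sum_sub_distrib] at h1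
  simp only [Matrix.add_apply, add_mul, Finset.sum_add_distrib] at h2
  have e1 := hlin a b 1
  have e2 := hlin b a 1
  have e3 := hlin a b Complex.I
  have e4 := hlin b a Complex.I
  simp only [hI] at e1 e2 e3 e4
  rw [e1, e2] at h1
  rw [e3, e4, ← mul_add] at h2
  have h3 := (mul_eq_zero.1 h2).resolve_left Complex.I_ne_zero
  linear_combination (h1 + h3) / 2

end LieDerivative

/-! ### Stein's equation for the absolute value -/

/-- The mean `1/√π` of `|G|` for a centred real Gaussian `G` of variance `1/2`. -/
noncomputable def gaussMean : ℝ := 1 / √Real.pi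

/-- The solution of Stein's equation `f' - 2 x f = |x| - 1/√π` with `f 0 = 0`. -/
noncomputable def steinSol (x : ℝ) : ℝ :=
  Real.exp (x ^ 2) * ∫ y in (0 : ℝ)..x, (|y| - gaussMean) * Real.exp (-y ^ 2)

/-- The derivative of `steinSol`, as prescribed by Stein's equation. -/
noncomputable def steinDeriv (x : ℝ) : ℝ := 2 * x * steinSol x + (|x| - gaussMean)

lemma hasDerivAt_steinSol (x : ℝ) : HasDerivAt steinSol (steinDeriv x) x := by
  have hc : Continuous fun y : ℝ => (|y| - gaussMean) * Real.exp (-y ^ 2) := by fun_prop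
  have h1 : HasDerivAt (fun u => ∫ y in (0 : ℝ)..u, (|y| - gaussMean) * Real.exp (-y ^ 2))
      ((|x| - gaussMean) * Real.exp (-x ^ 2)) x := hc.integral_hasStrictDerivAt 0 x |>.hasDerivAt
  have h2 : HasDerivAt (fun u : ℝ => Real.exp (u ^ 2)) (Real.exp (x ^ 2) * (2 * x)) x := by
    simpa using (hasDerivAt_pow 2 x).exp
  refine HasDerivAt.congr_deriv (h2.mul h1) ?_
  have e : Real.exp (x ^ 2) * Real.exp (-x ^ 2) = 1 := by rw [← Real.exp_add]; simp
  rw [steinDeriv, steinSol]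
  linear_combination ((|x| - gaussMean)) * e

lemma continuous_steinDeriv : Continuous steinDeriv := by
  have : Continuous steinSol :=
    continuous_iff_continuousAt.2 fun x => (hasDerivAt_steinSol x).continuousAt
  unfold steinDeriv
  fun_prop

lemma steinDeriv_neg (x : ℝ) : steinDeriv (-x) = steinDeriv x := by
  have h : ∫ y in (0 : ℝ)..(-x), (|y| - gaussMean) * Real.exp (-y ^ 2) =
      -∫ y in (0 : ℝ)..x, (|y| - gaussMean) * Real.exp (-y ^ 2) := by
    have := intervalIntegral.integral_comp_neg (a := 0) (b := x)
      (fun y : ℝ => (|y| - gaussMean) * Real.exp (-y ^ 2))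
    simp only [abs_neg, neg_sq, neg_zero] at this
    rw [this, intervalIntegral.integral_symm]
  simp only [steinDeriv, steinSol, h, abs_neg, neg_sq]
  ring

lemma integrable_exp_neg_sq : Integrable fun y : ℝ => Real.exp (-y ^ 2) := by
  simpa using integrable_exp_neg_mul_sq (b := 1) one_pos

/-- The Mills ratio bound for the Gaussian tail. -/
lemma two_mul_tail_le {x : ℝ} (hx : 0 ≤ x) :
    2 * x * ∫ y in Set.Ioi x, Real.exp (-y ^ 2) ≤ Real.exp (-x ^ 2) := by
  have hd : ∀ y ∈ Set.Ici x, HasDerivAt (fun y : ℝ => -Real.exp (-y ^ 2))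
      (2 * y * Real.exp (-y ^ 2)) y := by
    intro y _
    have := ((hasDerivAt_pow 2 y).fun_neg.exp).fun_neg
    refine this.congr_deriv ?_
    push_cast; ring
  have hl : Tendsto (fun y : ℝ => -Real.exp (-y ^ 2)) atTop (𝓝 0) := by
    rw [← neg_zero]
    refine (Real.tendsto_exp_atBot.comp ?_).neg
    exact tendsto_neg_atTop_atBot.comp (tendsto_pow_atTop two_ne_zero)
  have hnn : ∀ y ∈ Set.Ioi x, 0 ≤ 2 * y * Real.exp (-y ^ 2) := fun y hy => by
    have : 0 ≤ y := hx.trans (le_of_lt hy)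
    positivity
  have hint := integrableOn_Ioi_deriv_of_nonneg' hd hnn hl
  have hval := integral_Ioi_of_hasDerivAt_of_tendsto' hd hint hl
  rw [zero_sub, neg_neg] at hval
  rw [← hval, ← integral_const_mul]
  refine setIntegral_mono_on (integrable_exp_neg_sq.integrableOn.const_mul _) hint
    measurableSet_Ioi fun y hy => ?_
  have : x ≤ y := le_of_lt hy
  gcongr

lemma gaussMean_pos : 0 < gaussMean := by
  have := Real.pi_pos
  unfold gaussMean; positivity

/-- On `[0, ∞)` Stein's solution is a shifted multiple of the Mills ratio. -/
lemma steinSol_of_nonneg {x : ℝ} (hx : 0 ≤ x) :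
    steinSol x =
      gaussMean * (Real.exp (x ^ 2) * ∫ y in Set.Ioi x, Real.exp (-y ^ 2)) - 1 / 2 := by
  have e : Real.exp (x ^ 2) * Real.exp (-x ^ 2) = 1 := by rw [← Real.exp_add]; simp
  have hP : (∫ y in (0 : ℝ)..x, Real.exp (-y ^ 2)) + ∫ y in Set.Ioi x, Real.exp (-y ^ 2)
      = √Real.pi / 2 := by
    rw [intervalIntegral.integral_interval_add_Ioi integrable_exp_neg_sq.integrableOn
      integrable_exp_neg_sq.integrableOn]
    simpa using integral_gaussian_Ioi 1
  have hm : gaussMean * (√Real.pi / 2) = 1 / 2 := by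
    have : √Real.pi ≠ 0 := by positivity
    unfold gaussMean; field_simp
  have h1 : ∫ y in (0 : ℝ)..x, y * Real.exp (-y ^ 2) = (1 - Real.exp (-x ^ 2)) / 2 := by
    rw [intervalIntegral.integral_eq_sub_of_hasDerivAt (f := fun y => -Real.exp (-y ^ 2) / 2)]
    · simp; ring
    · intro y _
      have := ((hasDerivAt_pow 2 y).fun_neg.exp).fun_neg.div_const 2
      refine this.congr_deriv ?_
      push_cast; ring
    · exact Continuous.intervalIntegrable (by fun_prop) _ _
  have h2 : ∫ y in (0 : ℝ)..x, (|y| - gaussMean) * Real.exp (-y ^ 2) =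
      (∫ y in (0 : ℝ)..x, y * Real.exp (-y ^ 2)) -
        gaussMean * ∫ y in (0 : ℝ)..x, Real.exp (-y ^ 2) := by
    rw [← intervalIntegral.integral_const_mul, ← intervalIntegral.integral_sub
      (Continuous.intervalIntegrable (by fun_prop) _ _)
      (Continuous.intervalIntegrable (by fun_prop) _ _)]
    refine intervalIntegral.integral_congr fun y hy => ?_
    rw [Set.uIcc_of_le hx] at hy
    simp only [abs_of_nonneg hy.1]
    ring
  rw [steinSol, h2, h1]
  linear_combination (-gaussMean * Real.exp (x ^ 2)) * hP - Real.exp (x ^ 2) * hm - e / 2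

lemma abs_steinDeriv_le (x : ℝ) : |steinDeriv x| ≤ gaussMean := by
  wlog hx : 0 ≤ x generalizing x
  · rw [← steinDeriv_neg]; exact this (-x) (by linarith)
  have e : Real.exp (x ^ 2) * Real.exp (-x ^ 2) = 1 := by rw [← Real.exp_add]; simp
  set Q := ∫ y in Set.Ioi x, Real.exp (-y ^ 2) with hQ
  have hQ0 : 0 ≤ Q := setIntegral_nonneg measurableSet_Ioi fun y _ => (Real.exp_pos _).le
  have h1 : Real.exp (x ^ 2) * (2 * x * Q) ≤ 1 := by
    rw [← e]; exact mul_le_mul_of_nonneg_left (two_mul_tail_le hx) (Real.exp_pos _).le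
  have h0 : 0 ≤ Real.exp (x ^ 2) * (2 * x * Q) := by positivity
  have hd : steinDeriv x = gaussMean * (Real.exp (x ^ 2) * (2 * x * Q)) - gaussMean := by
    rw [steinDeriv, steinSol_of_nonneg hx, abs_of_nonneg hx]; ring
  have hm := gaussMean_pos
  rw [hd, abs_le]
  constructor <;> nlinarith

/-! ### Moments of traces and Stein's method -/

section Moments

variable {n : ℕ}

lemma HasLieDeriv.congr {F F' : Matrix.unitaryGroup (Fin n) ℂ → ℂ}
    {d d' : Matrix.unitaryGroup (Fin n) ℂ → Fin n → Fin n → ℂ} (h : HasLieDeriv F d)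
    (hF : ∀ V, F' V = F V) (hd : ∀ V i j, d' V i j = d V i j) : HasLieDeriv F' d' := by
  obtain rfl : F' = F := funext hF
  obtain rfl : d' = d := funext fun V => funext fun i => funext fun j => hd V i j
  exact h

lemma hasLieDeriv_trace :
    HasLieDeriv (fun V : Matrix.unitaryGroup (Fin n) ℂ => (V : Matrix (Fin n) (Fin n) ℂ).trace)
      (fun V i j => (V : Matrix (Fin n) (Fin n) ℂ) j i) := by
  refine (HasLieDeriv.sum (s := Finset.univ) fun a _ => hasLieDeriv_entry a a).congr
    (fun V => rfl) fun V i j => ?_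
  simp

lemma hasLieDeriv_sq_entry (a b : Fin n) :
    HasLieDeriv (fun V : Matrix.unitaryGroup (Fin n) ℂ =>
        ((V : Matrix (Fin n) (Fin n) ℂ) * (V : Matrix (Fin n) (Fin n) ℂ)) a b)
      (fun V i j => (if i = a then
          ((V : Matrix (Fin n) (Fin n) ℂ) * (V : Matrix (Fin n) (Fin n) ℂ)) j b else 0) +
        (V : Matrix (Fin n) (Fin n) ℂ) a i * (V : Matrix (Fin n) (Fin n) ℂ) j b) := by
  refine (HasLieDeriv.sum (s := Finset.univ) fun c _ =>
    (hasLieDeriv_entry a c).mul (hasLieDeriv_entry c b)).congr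
    (fun V => Matrix.mul_apply) fun V i j => ?_
  rw [Finset.sum_add_distrib]
  congr 1
  · split_ifs <;> simp [Matrix.mul_apply]
  · simp

lemma hasLieDeriv_sq_trace :
    HasLieDeriv (fun V : Matrix.unitaryGroup (Fin n) ℂ =>
        ((V : Matrix (Fin n) (Fin n) ℂ) * (V : Matrix (Fin n) (Fin n) ℂ)).trace)
      (fun V i j => 2 * ((V : Matrix (Fin n) (Fin n) ℂ) * (V : Matrix (Fin n) (Fin n) ℂ)) j i) := by
  refine (HasLieDeriv.sum (s := Finset.univ) fun a _ => hasLieDeriv_sq_entry a a).congr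
    (fun V => rfl) fun V i j => ?_
  rw [Finset.sum_add_distrib]
  simp only [Finset.sum_ite_eq, Finset.mem_univ, if_true]
  rw [two_mul, Matrix.mul_apply]
  congr 1
  exact Finset.sum_congr rfl fun c _ => mul_comm _ _

lemma sum_mul_star_entry (V : Matrix.unitaryGroup (Fin n) ℂ) :
    ∑ a, ∑ b, (V : Matrix (Fin n) (Fin n) ℂ) a b * star ((V : Matrix (Fin n) (Fin n) ℂ) a b)
      = n := by
  have h := congrArg Matrix.trace (Matrix.mem_unitaryGroup_iff.1 V.2)
  rw [Matrix.trace_one, Fintype.card_fin] at h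
  rw [← h]
  simp only [Matrix.trace, Matrix.diag_apply, Matrix.mul_apply, Matrix.star_apply]

lemma norm_trace_le (V : Matrix.unitaryGroup (Fin n) ℂ) :
    ‖(V : Matrix (Fin n) (Fin n) ℂ).trace‖ ≤ n := by
  calc ‖(V : Matrix (Fin n) (Fin n) ℂ).trace‖
      ≤ ∑ _a : Fin n, (1 : ℝ) := norm_sum_le_of_le _ fun a _ => entry_norm_bound_of_unitary V.2 a a
    _ = n := by simp

lemma sum_sum_trace (M : Matrix (Fin n) (Fin n) ℂ) (c : ℂ) :
    ∑ _a : Fin n, ∑ b, M b b * c = n * (M.trace * c) := by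
  simp [Matrix.trace, Finset.sum_mul]

variable [MeasurableSpace (Matrix.unitaryGroup (Fin n) ℂ)]
  [BorelSpace (Matrix.unitaryGroup (Fin n) ℂ)]
  {μ : Measure (Matrix.unitaryGroup (Fin n) ℂ)} [μ.IsMulLeftInvariant] [IsProbabilityMeasure μ]

/-- The Schwinger–Dyson equations summed over the diagonal, as they are applied below: the
`(a, b)` coefficient is taken from the derivative of the `(a, b)` member of a family. -/
lemma integral_diag_eq_zero {F : Fin n → Fin n → Matrix.unitaryGroup (Fin n) ℂ → ℂ}
    {d : Fin n → Fin n → Matrix.unitaryGroup (Fin n) ℂ → Fin n → Fin n → ℂ}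
    (h : ∀ a b, HasLieDeriv (F a b) (d a b)) : ∫ V, ∑ a, ∑ b, d a b V a b ∂μ = 0 := by
  rw [integral_finsetSum _ fun a _ => (continuous_finsetSum _ fun b _ =>
    (h a b).cont_deriv a b).integrable_of_compact]
  refine Finset.sum_eq_zero fun a _ => ?_
  rw [integral_finsetSum _ fun b _ => ((h a b).cont_deriv a b).integrable_of_compact]
  exact Finset.sum_eq_zero fun b _ => (h a b).integral_eq_zero a b

/-- `E |tr V|² = 1`, from the Schwinger–Dyson equations for `V a b * conj (tr V)`. -/
lemma integral_norm_trace_sq (hn : 0 < n) :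
    ∫ V : Matrix.unitaryGroup (Fin n) ℂ, ‖(V : Matrix (Fin n) (Fin n) ℂ).trace‖ ^ 2 ∂μ = 1 := by
  have h := integral_diag_eq_zero (μ := μ) fun a b : Fin n =>
    (hasLieDeriv_entry a b).mul (hasLieDeriv_trace (n := n)).conj
  have hp : ∀ V : Matrix.unitaryGroup (Fin n) ℂ,
      (∑ a, ∑ b, ((if a = a then (V : Matrix (Fin n) (Fin n) ℂ) b b else 0) *
        star (V : Matrix (Fin n) (Fin n) ℂ).trace + (V : Matrix (Fin n) (Fin n) ℂ) a b *
        -star ((V : Matrix (Fin n) (Fin n) ℂ) a b))) =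
      ((n * (‖(V : Matrix (Fin n) (Fin n) ℂ).trace‖ ^ 2 - 1) : ℝ) : ℂ) := by
    intro V
    simp only [if_true, mul_neg, Finset.sum_add_distrib, Finset.sum_neg_distrib,
      sum_mul_star_entry, sum_sum_trace]
    rw [Complex.star_def, Complex.mul_conj, Complex.normSq_eq_norm_sq]
    push_cast; ring
  replace h := (integral_congr_ae (Eventually.of_forall hp)).symm.trans h
  rw [integral_complex_ofReal, Complex.ofReal_eq_zero] at h
  have hi : Integrable (fun V : Matrix.unitaryGroup (Fin n) ℂ =>
      ‖(V : Matrix (Fin n) (Fin n) ℂ).trace‖ ^ 2) μ :=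
    (hasLieDeriv_trace.cont.norm.pow 2).integrable_of_compact
  rw [integral_const_mul, integral_sub hi (integrable_const _)] at h
  have hn' : (n : ℝ) ≠ 0 := by positivity
  have h2 := (mul_eq_zero.1 h).resolve_left hn'
  simp at h2
  linarith

/-- `E |tr V²|` is bounded uniformly in `n`. The Schwinger–Dyson equations for
`(V²) a b * conj (tr V²)` give `n E|tr V²|² + E[(tr V)² conj (tr V²)] = 2n`, and the second
term is controlled by `|tr V| ≤ n` and `E|tr V|² = 1`. -/
lemma integral_norm_sq_trace_le (hn : 0 < n) :
    ∫ V : Matrix.unitaryGroup (Fin n) ℂ,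
      ‖((V : Matrix (Fin n) (Fin n) ℂ) * (V : Matrix (Fin n) (Fin n) ℂ)).trace‖ ∂μ ≤ 3 := by
  have h := integral_diag_eq_zero (μ := μ) fun a b : Fin n =>
    (hasLieDeriv_sq_entry a b).mul (hasLieDeriv_sq_trace (n := n)).conj
  set Z : Matrix.unitaryGroup (Fin n) ℂ → ℂ := fun V => (V : Matrix (Fin n) (Fin n) ℂ).trace with hZ
  set T : Matrix.unitaryGroup (Fin n) ℂ → ℂ := fun V =>
    ((V : Matrix (Fin n) (Fin n) ℂ) * (V : Matrix (Fin n) (Fin n) ℂ)).trace with hT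
  have hZc : Continuous Z := hasLieDeriv_trace.cont
  have hTc : Continuous T := hasLieDeriv_sq_trace.cont
  have hp : ∀ V : Matrix.unitaryGroup (Fin n) ℂ,
      (∑ a, ∑ b, (((if a = a then
        ((V : Matrix (Fin n) (Fin n) ℂ) * (V : Matrix (Fin n) (Fin n) ℂ)) b b else 0) +
        (V : Matrix (Fin n) (Fin n) ℂ) a a * (V : Matrix (Fin n) (Fin n) ℂ) b b) * star (T V) +
        ((V : Matrix (Fin n) (Fin n) ℂ) * (V : Matrix (Fin n) (Fin n) ℂ)) a b *
        -star (2 * ((V : Matrix (Fin n) (Fin n) ℂ) * (V : Matrix (Fin n) (Fin n) ℂ)) a b))) =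
      (n * ((‖T V‖ ^ 2 - 2 : ℝ) : ℂ)) + Z V ^ 2 * star (T V) := by
    intro V
    have e1 := sum_mul_star_entry (V * V)
    have e2 : ∑ a, ∑ b, (V : Matrix (Fin n) (Fin n) ℂ) a a * (V : Matrix (Fin n) (Fin n) ℂ) b b *
        star (T V) = Z V ^ 2 * star (T V) := by
      simp only [hZ, Matrix.trace, Matrix.diag_apply, sq, Finset.sum_mul, Finset.mul_sum]
      exact Finset.sum_comm
    have e3 : ∀ w : ℂ, w * -star (2 * w) = -(2 * (w * star w)) := fun w => by
      simp; ring
    simp only [if_true, e3, add_mul, Finset.sum_add_distrib, Finset.sum_neg_distrib,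
      sum_sum_trace, e2, ← Finset.mul_sum]
    rw [← Submonoid.coe_mul, e1]
    change (n : ℂ) * (T V * star (T V)) + _ + _ = _
    rw [Complex.star_def, Complex.mul_conj, Complex.normSq_eq_norm_sq]
    push_cast; ring
  replace h := (integral_congr_ae (Eventually.of_forall hp)).symm.trans h
  have hi : Integrable (fun V => ‖T V‖ ^ 2) μ := (hTc.norm.pow 2).integrable_of_compact
  have hiZ : Integrable (fun V => ‖Z V‖ ^ 2) μ := (hZc.norm.pow 2).integrable_of_compact
  have hi2 : Integrable (fun V => (n : ℂ) * ((‖T V‖ ^ 2 - 2 : ℝ) : ℂ)) μ :=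
    Continuous.integrable_of_compact (by fun_prop)
  have hi3 : Integrable (fun V => Z V ^ 2 * star (T V)) μ :=
    Continuous.integrable_of_compact ((hZc.pow 2).mul hTc.star)
  rw [integral_add hi2 hi3, integral_const_mul, integral_complex_ofReal,
    integral_sub hi (integrable_const _)] at h
  set x := ∫ V, ‖T V‖ ^ 2 ∂μ with hx
  have hZ1 : ∫ V, ‖Z V‖ ^ 2 ∂μ = 1 := integral_norm_trace_sq hn
  have hb : ‖∫ V, Z V ^ 2 * star (T V) ∂μ‖ ≤ n * ((1 + x) / 2) := by
    rw [hx, ← hZ1, ← integral_add hiZ hi, ← integral_div, ← integral_const_mul]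
    refine norm_integral_le_of_norm_le (((hiZ.add hi).div_const 2).const_mul _)
      (Eventually.of_forall fun V => ?_)
    rw [norm_mul, norm_pow, norm_star, sq, mul_assoc]
    refine mul_le_mul (norm_trace_le V) ?_ (by positivity) (by positivity)
    nlinarith [sq_nonneg (‖Z V‖ - ‖T V‖)]
  have hn' : (0 : ℝ) < n := by positivity
  have hx5 : x ≤ 5 := by
    have e : ∫ V, Z V ^ 2 * star (T V) ∂μ = ((n * (2 - x) : ℝ) : ℂ) := by
      simp only [integral_const, probReal_univ, one_smul] at h
      push_cast at h ⊢
      linear_combination h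
    rw [e, Complex.norm_real, Real.norm_eq_abs, abs_mul, abs_of_pos hn'] at hb
    have := le_of_mul_le_mul_left hb hn'
    have := neg_abs_le (2 - x)
    linarith
  calc ∫ V, ‖T V‖ ∂μ ≤ ∫ V, (1 + ‖T V‖ ^ 2) / 2 ∂μ := by
        refine integral_mono hTc.norm.integrable_of_compact
          (((integrable_const 1).add hi).div_const 2) fun V => ?_
        simp only
        nlinarith [sq_nonneg (‖T V‖ - 1)]
    _ = (1 + x) / 2 := by
        rw [integral_div, integral_add (integrable_const _) hi]; simp [hx]
    _ ≤ 3 := by linarith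

/-- Stein's method: the Schwinger–Dyson equations for `V a b * f (Re tr V)` read
`E[2 X f(X)] = E[f'(X)] - E[Re (tr V²) f'(X)] / n` with `X = Re tr V`, and `f` is chosen as the
solution of Stein's equation for `|x|`. -/
lemma abs_integral_re_trace_sub_le (hn : 0 < n) :
    |∫ V : Matrix.unitaryGroup (Fin n) ℂ, |(V : Matrix (Fin n) (Fin n) ℂ).trace.re| ∂μ - gaussMean|
      ≤ 3 * gaussMean / n := by
  have h := integral_diag_eq_zero (μ := μ) fun a b : Fin n =>
    (hasLieDeriv_entry a b).mul
      ((hasLieDeriv_trace (n := n)).comp_re hasDerivAt_steinSol continuous_steinDeriv)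
  set Z : Matrix.unitaryGroup (Fin n) ℂ → ℂ := fun V => (V : Matrix (Fin n) (Fin n) ℂ).trace with hZ
  set T : Matrix.unitaryGroup (Fin n) ℂ → ℂ := fun V =>
    ((V : Matrix (Fin n) (Fin n) ℂ) * (V : Matrix (Fin n) (Fin n) ℂ)).trace with hT
  have hZc : Continuous Z := hasLieDeriv_trace.cont
  have hTc : Continuous T := hasLieDeriv_sq_trace.cont
  have hfc : Continuous steinSol :=
    continuous_iff_continuousAt.2 fun x => (hasDerivAt_steinSol x).continuousAt
  have hf'c := continuous_steinDeriv
  have hp : ∀ V : Matrix.unitaryGroup (Fin n) ℂ,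
      (∑ a, ∑ b, ((if a = a then (V : Matrix (Fin n) (Fin n) ℂ) b b else 0) *
        (steinSol (Z V).re : ℂ) + (V : Matrix (Fin n) (Fin n) ℂ) a b *
        ((steinDeriv (Z V).re : ℂ) * (((V : Matrix (Fin n) (Fin n) ℂ) b a -
          star ((V : Matrix (Fin n) (Fin n) ℂ) a b)) / 2)))) =
      n * (Z V * (steinSol (Z V).re : ℂ)) + (T V - n) * (steinDeriv (Z V).re : ℂ) / 2 := by
    intro V
    have e1 := sum_mul_star_entry V
    have e2 : ∑ a, ∑ b, (V : Matrix (Fin n) (Fin n) ℂ) a b * (V : Matrix (Fin n) (Fin n) ℂ) b a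
        = T V := by
      simp [hT, Matrix.trace, Matrix.mul_apply]
    have e3 : ∀ u v w c : ℂ, u * (c * ((v - w) / 2)) = c / 2 * (u * v - u * w) :=
      fun u v w c => by ring
    simp only [if_true, e3, Finset.sum_add_distrib, Finset.sum_sub_distrib,
      sum_sum_trace, ← Finset.mul_sum, e1, e2]
    change (n : ℂ) * (Z V * _) + _ = _
    ring
  replace h := (integral_congr_ae (Eventually.of_forall hp)).symm.trans h
  have hre := congrArg Complex.re h
  rw [← RCLike.re_eq_complex_re, ← integral_re (Continuous.integrable_of_compact (by fun_prop))]
    at hre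
  have hpt : ∀ V, RCLike.re (n * (Z V * (steinSol (Z V).re : ℂ)) +
      (T V - n) * (steinDeriv (Z V).re : ℂ) / 2) =
      (n / 2 : ℝ) * (gaussMean - |(Z V).re| + (T V).re * steinDeriv (Z V).re / n) := by
    intro V
    have hn' : (n : ℝ) ≠ 0 := by positivity
    have e : RCLike.re (n * (Z V * (steinSol (Z V).re : ℂ)) +
      (T V - n) * (steinDeriv (Z V).re : ℂ) / 2) = n * ((Z V).re * steinSol (Z V).re) +
        ((T V).re - n) * steinDeriv (Z V).re / 2 := by
      simp
    rw [e]
    field_simp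
    simp only [steinDeriv]
    ring
  replace hre := (integral_congr_ae (Eventually.of_forall hpt)).symm.trans hre
  rw [integral_const_mul] at hre
  have hn' : (0 : ℝ) < n := by positivity
  have hre2 := (mul_eq_zero.1 (hre.trans (by simp))).resolve_left (by positivity : (n / 2 : ℝ) ≠ 0)
  have hiX : Integrable (fun V => |(Z V).re|) μ := Continuous.integrable_of_compact (by fun_prop)
  have hiT : Integrable (fun V => (T V).re * steinDeriv (Z V).re / n) μ :=
    Continuous.integrable_of_compact (by fun_prop)
  have hiG : Integrable (fun V => gaussMean - |(Z V).re|) μ := (integrable_const _).sub hiX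
  rw [integral_add hiG hiT, integral_sub (integrable_const _) hiX] at hre2
  have hval : ∫ V, |(Z V).re| ∂μ - gaussMean = ∫ V, (T V).re * steinDeriv (Z V).re / n ∂μ := by
    simp only [integral_const, probReal_univ, one_smul] at hre2
    linarith
  rw [hval, ← Real.norm_eq_abs]
  have hm := gaussMean_pos
  calc ‖∫ V, (T V).re * steinDeriv (Z V).re / n ∂μ‖
      ≤ ∫ V, ‖T V‖ * (gaussMean / n) ∂μ := by
        refine norm_integral_le_of_norm_le (hTc.norm.integrable_of_compact.mul_const _)
          (Eventually.of_forall fun V => ?_)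
        rw [norm_div, norm_mul, mul_div_assoc, Real.norm_natCast]
        gcongr
        · exact Complex.abs_re_le_norm _
        · exact abs_steinDeriv_le _
    _ = (∫ V, ‖T V‖ ∂μ) * (gaussMean / n) := integral_mul_const _ _
    _ ≤ 3 * (gaussMean / n) :=
        mul_le_mul_of_nonneg_right (integral_norm_sq_trace_le hn) (by positivity)
    _ = 3 * gaussMean / n := by ring

end Moments

/-! ### From the real part to the modulus -/

section Rotation

lemma integral_abs_re_rotate (z : ℂ) :
    ∫ θ in (0 : ℝ)..Real.pi, |(Complex.exp (θ * Complex.I) * z).re| = 2 * ‖z‖ := by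
  have h1 : ∀ θ : ℝ, |(Complex.exp (θ * Complex.I) * z).re| = ‖z‖ * |Real.cos (θ + z.arg)| := by
    intro θ
    conv_lhs => rw [← Complex.norm_mul_exp_arg_mul_I z]
    rw [mul_left_comm, ← Complex.exp_add, ← add_mul, ← Complex.ofReal_add, Complex.re_ofReal_mul,
      Complex.exp_ofReal_mul_I_re, abs_mul, abs_norm]
  simp only [h1]
  rw [intervalIntegral.integral_const_mul,
    intervalIntegral.integral_comp_add_right (fun θ => |Real.cos θ|)]
  have hper : Function.Periodic (fun θ => |Real.cos θ|) Real.pi := fun θ => by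
    simp [Real.cos_add_pi]
  have h2 := hper.intervalIntegral_add_eq z.arg (-(Real.pi / 2))
  rw [zero_add, add_comm Real.pi, h2,
    show -(Real.pi / 2) + Real.pi = Real.pi / 2 by ring,
    intervalIntegral.integral_congr (g := Real.cos)]
  · simp; ring
  · intro θ hθ
    rw [Set.uIcc_of_le (by linarith [Real.pi_pos])] at hθ
    exact abs_of_nonneg (Real.cos_nonneg_of_mem_Icc hθ)

variable {n : ℕ} [MeasurableSpace (Matrix.unitaryGroup (Fin n) ℂ)]
  [BorelSpace (Matrix.unitaryGroup (Fin n) ℂ)]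
  {μ : Measure (Matrix.unitaryGroup (Fin n) ℂ)} [μ.IsMulLeftInvariant] [IsProbabilityMeasure μ]

/-- Invariance under the scalars `e^{iθ}` reduces the modulus to the real part. -/
lemma integral_norm_trace_eq :
    ∫ V : Matrix.unitaryGroup (Fin n) ℂ, ‖(V : Matrix (Fin n) (Fin n) ℂ).trace‖ ∂μ =
      Real.pi / 2 *
        ∫ V : Matrix.unitaryGroup (Fin n) ℂ, |(V : Matrix (Fin n) (Fin n) ℂ).trace.re| ∂μ := by
  have hZc : Continuous fun V : Matrix.unitaryGroup (Fin n) ℂ =>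
    (V : Matrix (Fin n) (Fin n) ℂ).trace := hasLieDeriv_trace.cont
  have hrot : ∀ θ : ℝ, ∫ V : Matrix.unitaryGroup (Fin n) ℂ,
      |(Complex.exp (θ * Complex.I) * (V : Matrix (Fin n) (Fin n) ℂ).trace).re| ∂μ =
      ∫ V : Matrix.unitaryGroup (Fin n) ℂ, |(V : Matrix (Fin n) (Fin n) ℂ).trace.re| ∂μ := by
    intro θ
    have hmem : Complex.exp (θ * Complex.I) • (1 : Matrix (Fin n) (Fin n) ℂ) ∈
        Matrix.unitaryGroup (Fin n) ℂ := by
      rw [Matrix.mem_unitaryGroup_iff, star_smul, star_one, smul_mul_smul_comm, one_mul,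
        Complex.star_def, Complex.mul_conj, Complex.normSq_eq_norm_sq,
        Complex.norm_exp_ofReal_mul_I]
      simp
    rw [← integral_mul_left_eq_self (fun V : Matrix.unitaryGroup (Fin n) ℂ =>
      |(V : Matrix (Fin n) (Fin n) ℂ).trace.re|) (⟨_, hmem⟩ : Matrix.unitaryGroup (Fin n) ℂ)]
    simp only [Submonoid.coe_mul, smul_mul_assoc, one_mul, Matrix.trace_smul, smul_eq_mul]
  have hint : Integrable (Function.uncurry fun (θ : ℝ) (V : Matrix.unitaryGroup (Fin n) ℂ) =>
      |(Complex.exp (θ * Complex.I) * (V : Matrix (Fin n) (Fin n) ℂ).trace).re|)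
      ((volume.restrict (Set.uIoc 0 Real.pi)).prod μ) := by
    have : IsFiniteMeasure (volume.restrict (Set.uIoc 0 Real.pi)) := by
      rw [Set.uIoc_of_le Real.pi_pos.le]; infer_instance
    refine Integrable.of_bound (C := n) (Continuous.aestronglyMeasurable ?_)
      (Eventually.of_forall fun p => ?_)
    · have := hZc.comp (continuous_snd (X := ℝ))
      unfold Function.uncurry
      simp only [Function.comp_def] at this
      fun_prop
    · simp only [Function.uncurry, Real.norm_eq_abs, abs_abs]
      refine (Complex.abs_re_le_norm _).trans ?_
      rw [norm_mul, Complex.norm_exp_ofReal_mul_I, one_mul]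
      exact norm_trace_le _
  have hswap := intervalIntegral_integral_swap hint
  simp only [hrot, integral_abs_re_rotate, intervalIntegral.integral_const, sub_zero, smul_eq_mul,
    integral_const_mul] at hswap
  linarith

end Rotation

/-- **The asymptotics of the average of `|tr V|` over the unitary group:
`lim_{n→∞} ∫_{𝒰_n} |tr V| dμ_n = √π / 2`.** -/
theorem stmt_8
    [∀ n : ℕ, MeasurableSpace (Matrix.unitaryGroup (Fin n) ℂ)]
    [∀ n : ℕ, BorelSpace (Matrix.unitaryGroup (Fin n) ℂ)]
    (μ : ∀ n : ℕ, Measure (Matrix.unitaryGroup (Fin n) ℂ))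
    [∀ n, (μ n).IsHaarMeasure] [∀ n, IsProbabilityMeasure (μ n)] :
    Tendsto (fun n : ℕ => ∫ V, ‖((V : Matrix (Fin n) (Fin n) ℂ)).trace‖ ∂(μ n)) atTop
      (𝓝 (Real.sqrt Real.pi / 2)) := by
  have hlim : √Real.pi / 2 = Real.pi / 2 * gaussMean := by
    have h : √Real.pi ≠ 0 := by positivity
    have := Real.mul_self_sqrt Real.pi_pos.le
    unfold gaussMean
    field_simp
    linarith
  simp only [integral_norm_trace_eq]
  rw [hlim]
  refine Tendsto.const_mul _ ?_
  rw [tendsto_iff_norm_sub_tendsto_zero]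
  refine squeeze_zero' (Eventually.of_forall fun n => norm_nonneg _)
    ((eventually_gt_atTop 0).mono fun n hn => abs_integral_re_trace_sub_le hn)
    (tendsto_const_div_atTop_nhds_zero_nat _)
end

section
/- Let ‖·‖ be a norm on ℂⁿ such that |z_j| ≤ |w_j| for all j implies ‖z‖ ≤ ‖w‖ (i.e. X_n = (ℂⁿ,‖·‖) is a Banach lattice), let m ∈ ℕ, and let J ⊆ ℕ₀ⁿ be a finite index set with |α| ≤ m for every α ∈ J. Let J_T = {α ∈ J : α_j ∈ {0,1} for all j} be the tetrahedral part of J. Then for every polynomial P(z) = Σ_{α∈J} c_α z^α one has sup_{‖z‖≤1} |Σ_{α∈J_T} c_α z^α| ≤ κ^m · sup_{‖z‖≤1} |P(z)|, where κ = (∏_{k=1}^∞ sinc(π/𝔭_k))^{-1}, sinc x = (sin x)/x, and 𝔭_k denotes the k-th prime number (the infinite product converges to a positive real number, and κ = 2.209…). -/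
/-!
Rotating one coordinate `w j` by `exp (iθ)` leaves the unit ball invariant, and averaging a polynomial
over `θ ∈ [-π/p, π/p]` multiplies its coefficient of index `α` by `sinc (α j π / p)`
(`avg_bound`). That factor vanishes when `α j` is a positive multiple of `p` and is `1` when
`α j = 0`. Iterating over all coordinates and over a finite set of primes containing those up to `m`
(`avg_bound_all`) therefore kills every non-tetrahedral monomial, and multiplies a tetrahedral one
by `r ^ |α|`, where `r` is the finite product of the numbers `sinc (π / p)`. Hence the tetrahedral
part `Q` is bounded by `sup |P|` on the ball of radius `r`.

Since `Q` has degree at most `m`, the maximum principle for the reversed polynomial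
`μ ↦ μ ^ m Q (z / μ)` on the disc of radius `1 / r` (`dilate_bound`) gives `|Q| ≤ r⁻ᵐ sup |P|` on the
unit ball. Finally `r` is at least the infinite product, whose factors lie in `(0, 1]`; the product
converges to a positive limit because `1 - sinc x ≤ x² / 6` and `∑ 1 / p ^ 2` converges.
-/

/-- The value at `π / p_k` of `sinc`, where `p_k` is the `k`-th prime (counted from `k = 0`). -/
noncomputable def primeSinc (k : ℕ) : ℝ := Real.sinc (Real.pi / (Nat.nth Nat.Prime k))

lemma nth_prime_ge (k : ℕ) : k + 2 ≤ Nat.nth Nat.Prime k := Nat.add_two_le_nth_prime k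

lemma pi_div_prime_pos (k : ℕ) : 0 < Real.pi / (Nat.nth Nat.Prime k) := by
  have h : 0 < Nat.nth Nat.Prime k := by have := nth_prime_ge k; omega
  have h' : (0 : ℝ) < Nat.nth Nat.Prime k := by exact_mod_cast h
  exact div_pos Real.pi_pos h'

lemma primeSinc_eq (k : ℕ) : primeSinc k =
    Real.sin (Real.pi / (Nat.nth Nat.Prime k)) / (Real.pi / (Nat.nth Nat.Prime k)) :=
  Real.sinc_of_ne_zero (pi_div_prime_pos k).ne'

lemma primeSinc_pos (k : ℕ) : 0 < primeSinc k := by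
  rw [primeSinc_eq]
  refine div_pos (Real.sin_pos_of_pos_of_lt_pi (pi_div_prime_pos k) ?_) (pi_div_prime_pos k)
  have h : (1 : ℝ) < Nat.nth Nat.Prime k := by
    have := nth_prime_ge k
    exact_mod_cast (by omega : 1 < Nat.nth Nat.Prime k)
  exact div_lt_self Real.pi_pos h

lemma primeSinc_le_one (k : ℕ) : primeSinc k ≤ 1 := Real.sinc_le_one _

lemma summable_primeSinc_sub_one : Summable fun k => primeSinc k - 1 := by
  have hs : Summable fun k : ℕ => Real.pi ^ 2 / 6 * (1 / ((k + 1 : ℕ) : ℝ) ^ 2) :=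
    ((summable_nat_add_iff 1).2
      (Real.summable_one_div_nat_pow.2 (by norm_num : 1 < 2))).mul_left _
  refine hs.of_norm_bounded fun k => ?_
  set x := Real.pi / (Nat.nth Nat.Prime k : ℝ) with hx
  have hx0 : 0 < x := pi_div_prime_pos k
  have hlow : 1 - x ^ 2 / 6 ≤ primeSinc k := by
    rw [primeSinc_eq, ← hx, le_div_iff₀ hx0]
    have := Real.sin_ge_sub_cube hx0.le
    nlinarith
  have hle : x ≤ Real.pi / ((k + 1 : ℕ) : ℝ) := by
    rw [hx]
    gcongr
    have := nth_prime_ge k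
    omega
  have hsq : x ^ 2 ≤ (Real.pi / ((k + 1 : ℕ) : ℝ)) ^ 2 := by gcongr
  rw [Real.norm_eq_abs, abs_of_nonpos (by linarith [primeSinc_le_one k])]
  rw [div_pow Real.pi ((k + 1 : ℕ) : ℝ)] at hsq
  have : Real.pi ^ 2 / 6 * (1 / ((k + 1 : ℕ) : ℝ) ^ 2)
      = Real.pi ^ 2 / ((k + 1 : ℕ) : ℝ) ^ 2 / 6 := by ring
  rw [this]
  linarith

lemma summable_log_primeSinc : Summable fun k => Real.log (primeSinc k) :=
  (Real.summable_log_one_add_of_summable summable_primeSinc_sub_one).congr (by simp)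

lemma multipliable_primeSinc : Multipliable primeSinc :=
  Real.multipliable_of_summable_log primeSinc_pos summable_log_primeSinc

lemma tprod_primeSinc_pos : 0 < ∏' k, primeSinc k := by
  rw [← Real.rexp_tsum_eq_tprod primeSinc_pos summable_log_primeSinc]
  exact Real.exp_pos _

lemma tprod_primeSinc_le (N : ℕ) : ∏' k, primeSinc k ≤ ∏ k ∈ Finset.range N, primeSinc k := by
  refine Antitone.le_of_tendsto (antitone_nat_of_succ_le fun n => ?_)
    multipliable_primeSinc.tendsto_prod_tprod_nat N
  rw [Finset.prod_range_succ]
  exact mul_le_of_le_one_right (Finset.prod_nonneg fun k _ => (primeSinc_pos k).le)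
    (primeSinc_le_one n)

lemma integral_exp_nat_mul (a : ℝ) (k : ℕ) :
    ∫ t in -a..a, Complex.exp (t * Complex.I) ^ k = 2 * a * Real.sinc (k * a) := by
  rcases Nat.eq_zero_or_pos k with rfl | hk
  · simp; ring
  have hk' : (k : ℝ) ≠ 0 := by positivity
  have h := intervalIntegral.integral_comp_mul_left (a := -a) (b := a)
    (fun t : ℝ => Complex.exp (t * Complex.I)) hk'
  rw [mul_neg, integral_exp_mul_I_eq_sinc] at h
  have h2 : ∀ t : ℝ, Complex.exp (t * Complex.I) ^ k
      = Complex.exp (((k * t : ℝ) : ℂ) * Complex.I) := by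
    intro t
    rw [← Complex.exp_nat_mul]
    push_cast
    ring_nf
  simp_rw [h2, h]
  have hk2 : (k : ℂ) ≠ 0 := by exact_mod_cast hk.ne'
  rw [Complex.real_smul]
  push_cast
  field_simp

/-- Averaging over rotations of the `j`-th coordinate by angles in `[-a, a]`: multiplying each
coefficient by `sinc (α j * a)` does not increase a bound valid on the unit ball. -/
lemma avg_bound {n : ℕ} {ν : (Fin n → ℂ) → ℝ}
    (hmono : ∀ z w : Fin n → ℂ, (∀ j, ‖z j‖ ≤ ‖w j‖) → ν z ≤ ν w)
    (J : Finset (Fin n → ℕ)) (c : (Fin n → ℕ) → ℂ) (M : ℝ)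
    (hM : ∀ w, ν w ≤ 1 → ‖∑ α ∈ J, c α * ∏ i, w i ^ α i‖ ≤ M) (j : Fin n) {a : ℝ} (ha : 0 < a)
    (w : Fin n → ℂ) (hw : ν w ≤ 1) :
    ‖∑ α ∈ J, (c α * Real.sinc (α j * a)) * ∏ i, w i ^ α i‖ ≤ M := by
  set W : ℝ → Fin n → ℂ := fun t i => (if i = j then Complex.exp (t * Complex.I) else 1) * w i
  have hW : ∀ t, ν (W t) ≤ 1 := fun t => by
    refine (hmono _ _ fun i => ?_).trans hw
    by_cases h : i = j <;> simp [W, h, Complex.norm_exp_ofReal_mul_I]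
  have hprod : ∀ t (α : Fin n → ℕ), ∏ i, W t i ^ α i
      = Complex.exp (t * Complex.I) ^ α j * ∏ i, w i ^ α i := by
    intro t α
    simp only [W, mul_pow, Finset.prod_mul_distrib, ite_pow, one_pow]
    simp
  have hint : ∫ t in -a..a, ∑ α ∈ J, c α * ∏ i, W t i ^ α i
      = (2 * a : ℝ) * ∑ α ∈ J, (c α * Real.sinc (α j * a)) * ∏ i, w i ^ α i := by
    simp_rw [hprod]
    rw [intervalIntegral.integral_finsetSum fun α _ =>
      Continuous.intervalIntegrable (by fun_prop) _ _, Finset.mul_sum]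
    refine Finset.sum_congr rfl fun α _ => ?_
    rw [intervalIntegral.integral_const_mul, intervalIntegral.integral_mul_const,
      integral_exp_nat_mul]
    push_cast
    ring
  have hb := intervalIntegral.norm_integral_le_of_norm_le_const (a := -a) (b := a)
    (f := fun t => ∑ α ∈ J, c α * ∏ i, W t i ^ α i) (C := M) fun t _ => hM _ (hW t)
  rw [hint, norm_mul, Complex.norm_real, Real.norm_eq_abs, sub_neg_eq_add, ← two_mul,
    abs_of_pos (by positivity : 0 < 2 * a), mul_comm M] at hb
  exact le_of_mul_le_mul_left hb (by positivity)

/-- The averages of `avg_bound`, iterated over a finite set of pairs `(coordinate, prime)`. -/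
lemma avg_bound_all {n : ℕ} {ν : (Fin n → ℂ) → ℝ}
    (hmono : ∀ z w : Fin n → ℂ, (∀ j, ‖z j‖ ≤ ‖w j‖) → ν z ≤ ν w)
    (J : Finset (Fin n → ℕ)) (c : (Fin n → ℕ) → ℂ) (M : ℝ)
    (hM : ∀ w, ν w ≤ 1 → ‖∑ α ∈ J, c α * ∏ i, w i ^ α i‖ ≤ M) (S : Finset (Fin n × ℕ)) :
    ∀ w, ν w ≤ 1 → ‖∑ α ∈ J, (c α * ((∏ q ∈ S,
      Real.sinc (α q.1 * (Real.pi / (Nat.nth Nat.Prime q.2))) : ℝ) : ℂ)) * ∏ i, w i ^ α i‖ ≤ M := by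
  induction S using Finset.induction_on with
  | empty => simpa using hM
  | insert q S hq ih =>
    intro w hw
    have h := avg_bound hmono J _ M ih q.1 (pi_div_prime_pos q.2) w hw
    convert h using 4 with α
    rw [Finset.prod_insert hq]
    push_cast
    ring

/-- For `k ≤ m` the product of the factors `sinc (k π / p)` over the first `m + 1` primes `p` is
`0` unless `k ≤ 1`, since a prime divisor of `k` contributes `sin (k π / p) = 0`. -/
lemma prod_sinc_eq {m k : ℕ} (hk : k ≤ m) :
    ∏ l ∈ Finset.range (m + 1), Real.sinc (k * (Real.pi / (Nat.nth Nat.Prime l)))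
      = if k ≤ 1 then (∏ l ∈ Finset.range (m + 1), primeSinc l) ^ k else 0 := by
  split_ifs with h1
  · interval_cases k <;> simp [primeSinc]
  · have hp : (k.minFac).Prime := Nat.minFac_prime (by omega)
    have hle : k.minFac ≤ k := Nat.minFac_le (by omega)
    have hcount : Nat.count Nat.Prime k.minFac ≤ k.minFac := Nat.count_le _
    refine Finset.prod_eq_zero (i := Nat.count Nat.Prime k.minFac)
      (Finset.mem_range.2 (by omega)) ?_
    rw [Nat.nth_count hp]
    obtain ⟨d, hd⟩ := Nat.minFac_dvd k
    have hp0 : (k.minFac : ℝ) ≠ 0 := by exact_mod_cast hp.ne_zero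
    have hk0 : (k : ℝ) ≠ 0 := by exact_mod_cast (by omega : k ≠ 0)
    have he : (k : ℝ) * (Real.pi / k.minFac) = d * Real.pi := by
      have : (k : ℝ) = k.minFac * d := by exact_mod_cast hd
      field_simp
      linarith
    rw [Real.sinc_of_ne_zero (mul_ne_zero hk0 (div_ne_zero Real.pi_ne_zero hp0)), he,
      Real.sin_nat_mul_pi, zero_div]

/-- A polynomial of degree at most `m` bounded by `M` on the ball of radius `r ≤ 1` is bounded by
`r⁻¹ ^ m * M` on the unit ball: maximum principle for the reversed polynomial on a complex line. -/
lemma dilate_bound {n m : ℕ} {ν : (Fin n → ℂ) → ℝ}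
    (hsmul : ∀ (a : ℂ) (z : Fin n → ℂ), ν (a • z) = ‖a‖ * ν z)
    (T : Finset (Fin n → ℕ)) (hdeg : ∀ α ∈ T, ∑ j, α j ≤ m) (c : (Fin n → ℕ) → ℂ) (M : ℝ)
    {r : ℝ} (hr : 0 < r) (hr1 : r ≤ 1)
    (hM : ∀ w, ν w ≤ 1 → ‖∑ α ∈ T, c α * ∏ i, ((r : ℂ) * w i) ^ α i‖ ≤ M)
    (z : Fin n → ℂ) (hz : ν z ≤ 1) :
    ‖∑ α ∈ T, c α * ∏ i, z i ^ α i‖ ≤ r⁻¹ ^ m * M := by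
  set g : ℂ → ℂ := fun μ => ∑ α ∈ T, c α * μ ^ (m - ∑ j, α j) * ∏ i, z i ^ α i with hg
  have hgd : Differentiable ℂ g := by
    rw [hg]
    fun_prop
  have key := Complex.norm_le_of_forall_mem_frontier_norm_le (f := g)
    (Metric.isBounded_ball (x := (0 : ℂ)) (r := r⁻¹)) hgd.diffContOnCl (C := r⁻¹ ^ m * M) ?_
    (z := 1) ?_
  · simpa [hg] using key
  · intro μ hμ
    have hμn : ‖μ‖ = r⁻¹ := by simpa using Metric.frontier_ball_subset_sphere hμ
    have hμ0 : μ ≠ 0 := by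
      rw [← norm_pos_iff, hμn]; positivity
    have hrc : (r : ℂ) ≠ 0 := by exact_mod_cast hr.ne'
    have hgμ : g μ = μ ^ m *
        ∑ α ∈ T, c α * ∏ i, ((r : ℂ) * (((r : ℂ) * μ)⁻¹ • z) i) ^ α i := by
      simp only [hg, Finset.mul_sum]
      refine Finset.sum_congr rfl fun α hα => ?_
      have h1 : ∀ i, (r : ℂ) * (((r : ℂ) * μ)⁻¹ • z) i = μ⁻¹ * z i := by
        intro i
        simp only [Pi.smul_apply, smul_eq_mul]
        field_simp
      simp_rw [h1, mul_pow, Finset.prod_mul_distrib, Finset.prod_pow_eq_pow_sum]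
      rw [pow_sub₀ _ hμ0 (hdeg α hα), inv_pow]
      ring
    rw [hgμ, norm_mul, norm_pow, hμn]
    refine mul_le_mul_of_nonneg_left (hM _ ?_) (by positivity)
    rw [hsmul, norm_inv, norm_mul, Complex.norm_real, hμn, Real.norm_of_nonneg hr.le,
      mul_inv_cancel₀ hr.ne', inv_one, one_mul]
    exact hz
  · rw [closure_ball _ (inv_ne_zero hr.ne')]
    simpa using (one_le_inv₀ hr).2 hr1

/-- Polynomials are bounded on the unit ball, because every coordinate is: the lattice property
gives `‖w i‖ * ν e_i ≤ ν w` for the `i`-th unit vector `e_i`. -/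
lemma bddAbove_poly {n : ℕ} {ν : (Fin n → ℂ) → ℝ}
    (hdef : ∀ z, ν z = 0 → z = 0)
    (hsmul : ∀ (a : ℂ) (z : Fin n → ℂ), ν (a • z) = ‖a‖ * ν z)
    (hmono : ∀ z w : Fin n → ℂ, (∀ j, ‖z j‖ ≤ ‖w j‖) → ν z ≤ ν w)
    (J : Finset (Fin n → ℕ)) (c : (Fin n → ℕ) → ℂ) :
    BddAbove {t : ℝ | ∃ w : Fin n → ℂ, ν w ≤ 1 ∧ t = ‖∑ α ∈ J, c α * ∏ j, w j ^ α j‖} := by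
  have h0 : ν 0 = 0 := by simpa using hsmul 0 0
  have hpos : ∀ i : Fin n, 0 < ν (Pi.single i 1) := fun i => by
    have h1 : ν 0 ≤ ν (Pi.single i 1) := hmono _ _ fun j => by simp
    refine lt_of_le_of_ne (h0 ▸ h1) fun h => ?_
    simpa using congrFun (hdef _ h.symm) i
  refine ⟨∑ α ∈ J, ‖c α‖ * ∏ i, ((ν (Pi.single i 1))⁻¹) ^ α i, ?_⟩
  rintro t ⟨w, hw, rfl⟩
  have hwi : ∀ i, ‖w i‖ ≤ (ν (Pi.single i 1))⁻¹ := fun i => by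
    have h1 : ν (w i • Pi.single i 1) ≤ ν w := hmono _ _ fun j => by
      by_cases h : j = i
      · subst h; simp
      · simp [h]
    rw [hsmul] at h1
    rw [← one_div, le_div_iff₀ (hpos i)]
    exact h1.trans hw
  refine (norm_sum_le _ _).trans (Finset.sum_le_sum fun α _ => ?_)
  rw [norm_mul, norm_prod]
  simp_rw [norm_pow]
  gcongr with i
  exact hwi i

/-- **The coefficient projection onto the tetrahedral part of a polynomial on a
finite-dimensional Banach lattice has norm at most `κ^m`** (Ortega-Cerdà–Ounaïes–Seip). -/
theorem stmt_9 (n m : ℕ) (ν : (Fin n → ℂ) → ℝ)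
    (hdef : ∀ z, ν z = 0 → z = 0)
    (hsmul : ∀ (a : ℂ) (z : Fin n → ℂ), ν (a • z) = ‖a‖ * ν z)
    (htri : ∀ z w : Fin n → ℂ, ν (z + w) ≤ ν z + ν w)
    (hmono : ∀ z w : Fin n → ℂ, (∀ j, ‖z j‖ ≤ ‖w j‖) → ν z ≤ ν w)
    (J : Finset (Fin n → ℕ)) (hdeg : ∀ α ∈ J, ∑ j, α j ≤ m)
    (c : (Fin n → ℕ) → ℂ) :
    let sinc : ℝ → ℝ := fun x => Real.sin x / x
    let κ : ℝ := (∏' k : ℕ, sinc (Real.pi / (Nat.nth Nat.Prime k)))⁻¹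
    (Multipliable fun k : ℕ => sinc (Real.pi / (Nat.nth Nat.Prime k))) ∧
    0 < ∏' k : ℕ, sinc (Real.pi / (Nat.nth Nat.Prime k)) ∧
    ∀ z : Fin n → ℂ, ν z ≤ 1 →
      ‖∑ α ∈ J.filter (fun α => ∀ j, α j ≤ 1), c α * ∏ j, z j ^ α j‖ ≤
        κ ^ m *
          sSup {t : ℝ | ∃ w : Fin n → ℂ, ν w ≤ 1 ∧ t = ‖∑ α ∈ J, c α * ∏ j, w j ^ α j‖} := by
  intro sinc κ
  have hfun : (fun k : ℕ => sinc (Real.pi / (Nat.nth Nat.Prime k))) = primeSinc :=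
    funext fun k => (primeSinc_eq k).symm
  have hκ : κ = (∏' k, primeSinc k)⁻¹ := by rw [← hfun]
  rw [hfun, hκ]
  refine ⟨multipliable_primeSinc, tprod_primeSinc_pos, fun z hz => ?_⟩
  set M := sSup {t : ℝ | ∃ w : Fin n → ℂ, ν w ≤ 1 ∧ t = ‖∑ α ∈ J, c α * ∏ j, w j ^ α j‖}
  have hM : ∀ w, ν w ≤ 1 → ‖∑ α ∈ J, c α * ∏ i, w i ^ α i‖ ≤ M := fun w hw =>
    le_csSup (bddAbove_poly hdef hsmul hmono J c) ⟨w, hw, rfl⟩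
  have hM0 : 0 ≤ M := (norm_nonneg _).trans (hM z hz)
  set r := ∏ l ∈ Finset.range (m + 1), primeSinc l with hr
  have hr0 : 0 < r := Finset.prod_pos fun k _ => primeSinc_pos k
  have hr1 : r ≤ 1 := Finset.prod_le_one (fun k _ => (primeSinc_pos k).le)
    fun k _ => primeSinc_le_one k
  -- The averages turn `P` into the tetrahedral part evaluated at `r • w`.
  have hT : ∀ w, ν w ≤ 1 →
      ‖∑ α ∈ J.filter (fun α => ∀ j, α j ≤ 1), c α * ∏ i, ((r : ℂ) * w i) ^ α i‖ ≤ M := by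
    intro w hw
    have h := avg_bound_all hmono J c M hM (Finset.univ ×ˢ Finset.range (m + 1)) w hw
    convert h using 2
    rw [Finset.sum_filter]
    refine Finset.sum_congr rfl fun α hα => ?_
    have hα' : ∀ j, α j ≤ m := fun j =>
      (Finset.single_le_sum (fun i _ => Nat.zero_le (α i)) (Finset.mem_univ j)).trans (hdeg α hα)
    rw [Finset.prod_product]
    simp only [prod_sinc_eq (hα' _), ← hr]
    split_ifs with h1
    · simp [h1, mul_pow, Finset.prod_mul_distrib, mul_assoc]
    · push Not at h1
      obtain ⟨j, hj⟩ := h1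
      rw [Finset.prod_eq_zero (Finset.mem_univ j) (by simp [hj.not_ge])]
      simp
  refine (dilate_bound hsmul _ (fun α hα => hdeg α (Finset.mem_filter.1 hα).1) c M hr0 hr1 hT
    z hz).trans ?_
  have := tprod_primeSinc_pos
  gcongr
  exact tprod_primeSinc_le _
end

section
/- Let X_n = (ℂⁿ,‖·‖) be a complex Banach space, let J ⊆ ℕ₀ⁿ be a finite nonempty index set of degree m = max_{α∈J}|α|, and for 0 ≤ k ≤ m let J_k = {α ∈ J : |α| = k}. Then max_{0≤k≤m} λ(𝒫_{J_k}(X_n)) ≤ λ(𝒫_J(X_n)) ≤ (m+1) · max_{0≤k≤m} λ(𝒫_{J_k}(X_n)). -/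
open scoped ENNReal

/-!
The discrete Fourier transform over the group of `(m + 1)`-th roots of unity extracts homogeneous
parts: with `ω` a primitive `(m + 1)`-th root of unity, the operator
`H_k f (s) = (m + 1)⁻¹ * ∑_{j ≤ m} ω^(-jk) f (ω^j s)` on `ℓ∞(S)` (`homPart`) is a contraction,
because the unit sphere `S` is circle-invariant, and it sends a polynomial of degree at most `m`
to its `k`-homogeneous part (`homPart_apply_of_poly`).

Lower bound: if `Q` is a projection onto `𝒫_J`, then `H_k ∘ Q` is a projection onto `𝒫_{J_k}` of
norm at most `‖Q‖`. Upper bound: if `Q_k` are projections onto `𝒫_{J_k}`, then `∑_k Q_k ∘ H_k` is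
a projection onto `𝒫_J` of norm at most `∑_k ‖Q_k‖`. Since `𝒫_I` is finite-dimensional, bounded
projections exist (`projNorms_nonempty`), so that none of the infima is taken over the empty set.
-/

/-- The isometric copy, inside `ℓ∞(S)` (`S` the unit sphere of the norm `ν` on `ℂⁿ`),
of the space of polynomials supported on the finite index set `I`:
all bounded functions on `S` which are restrictions of polynomials `z ↦ ∑_{α ∈ I} c_α z^α`. -/
def polyCopy (n : ℕ) (ν : (Fin n → ℂ) → ℝ) (I : Finset (Fin n → ℕ)) :
    Set (lp (fun _ : {z : Fin n → ℂ // ν z = 1} => ℂ) ∞) :=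
  {f | ∃ c : (Fin n → ℕ) → ℂ, ∀ s : {z : Fin n → ℂ // ν z = 1},
      f s = ∑ α ∈ I, c α * ∏ j, (s : Fin n → ℂ) j ^ α j}

/-- The projection constant `λ(𝒫_I(X_n))`: the infimum of the norms of all bounded linear
projections of `ℓ∞(S)` onto the isometric copy of `𝒫_I(X_n)` obtained by restricting
polynomials to the unit sphere `S` of `X_n = (ℂⁿ, ν)`. -/
noncomputable def projConst (n : ℕ) (ν : (Fin n → ℂ) → ℝ) (I : Finset (Fin n → ℕ)) : ℝ :=
  sInf {r : ℝ | ∃ Q : lp (fun _ : {z : Fin n → ℂ // ν z = 1} => ℂ) ∞ →L[ℂ]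
      lp (fun _ : {z : Fin n → ℂ // ν z = 1} => ℂ) ∞,
    (∀ f, Q f ∈ polyCopy n ν I) ∧ (∀ f ∈ polyCopy n ν I, Q f = f) ∧ ‖Q‖ = r}

/-- The unit sphere of `ν`. -/
abbrev Sph (n : ℕ) (ν : (Fin n → ℂ) → ℝ) := {z : Fin n → ℂ // ν z = 1}

/-- The space `ℓ∞(S)` of bounded functions on the unit sphere of `ν`. -/
noncomputable abbrev LInf (n : ℕ) (ν : (Fin n → ℂ) → ℝ) := lp (fun _ : Sph n ν => ℂ) ∞

/-- `Q` is a bounded linear projection of `ℓ∞(S)` onto the copy of `𝒫_I`. -/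
def IsPolyProj (n : ℕ) (ν : (Fin n → ℂ) → ℝ) (I : Finset (Fin n → ℕ))
    (Q : LInf n ν →L[ℂ] LInf n ν) : Prop :=
  (∀ f, Q f ∈ polyCopy n ν I) ∧ ∀ f ∈ polyCopy n ν I, Q f = f

/-! ### Projections and the projection constant -/

/-- `polyCopy` as a linear subspace of `ℓ∞(S)`. -/
def polySub (n : ℕ) (ν : (Fin n → ℂ) → ℝ) (I : Finset (Fin n → ℕ)) :
    Submodule ℂ (LInf n ν) where
  carrier := polyCopy n ν I
  zero_mem' := ⟨0, fun s => by simp⟩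
  add_mem' := by
    rintro f g ⟨c, hc⟩ ⟨d, hd⟩
    refine ⟨c + d, fun s => ?_⟩
    rw [lp.coeFn_add, Pi.add_apply, hc, hd, ← Finset.sum_add_distrib]
    exact Finset.sum_congr rfl fun α _ => by rw [Pi.add_apply, add_mul]
  smul_mem' := by
    rintro a f ⟨c, hc⟩
    refine ⟨a • c, fun s => ?_⟩
    rw [lp.coeFn_smul, Pi.smul_apply, hc, smul_eq_mul, Finset.mul_sum]
    exact Finset.sum_congr rfl fun α _ => by rw [Pi.smul_apply, smul_eq_mul, mul_assoc]

/-- Forgetting boundedness embeds `polySub` into the span of finitely many monomials. -/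
lemma finiteDimensional_polySub (n : ℕ) (ν : (Fin n → ℂ) → ℝ) (I : Finset (Fin n → ℕ)) :
    FiniteDimensional ℂ (polySub n ν I) := by
  classical
  let mono : (Fin n → ℕ) → (Sph n ν → ℂ) := fun α s => ∏ j, (s : Fin n → ℂ) j ^ α j
  let W : Submodule ℂ (Sph n ν → ℂ) := Submodule.span ℂ (I.image mono : Set (Sph n ν → ℂ))
  have : FiniteDimensional ℂ W := FiniteDimensional.span_finset ℂ _
  let L : polySub n ν I →ₗ[ℂ] W :=
    { toFun := fun f => ⟨fun s => (f : LInf n ν) s, by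
        obtain ⟨c, hc⟩ := f.2
        have : (fun s => (f : LInf n ν) s) = ∑ α ∈ I, c α • mono α := by
          funext s
          rw [hc s]
          simp [mono]
        rw [this]
        refine Submodule.sum_mem _ fun α hα => Submodule.smul_mem _ _ (Submodule.subset_span ?_)
        exact Finset.mem_coe.2 (Finset.mem_image_of_mem _ hα)⟩
      map_add' := fun f g => rfl
      map_smul' := fun a f => rfl }
  refine FiniteDimensional.of_injective L fun f g h => ?_
  apply Subtype.ext
  apply lp.ext
  exact congrArg (fun w : W => (w : Sph n ν → ℂ)) h

lemma exists_isPolyProj (n : ℕ) (ν : (Fin n → ℂ) → ℝ) (I : Finset (Fin n → ℕ)) :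
    ∃ Q, IsPolyProj n ν I Q := by
  have := finiteDimensional_polySub n ν I
  obtain ⟨p, hp⟩ := Submodule.ClosedComplemented.of_finiteDimensional (polySub n ν I)
  refine ⟨(polySub n ν I).subtypeL.comp p, fun f => (p f).2, fun f hf => ?_⟩
  exact congrArg Subtype.val (hp ⟨f, hf⟩)

lemma projConst_le {n : ℕ} {ν : (Fin n → ℂ) → ℝ} {I : Finset (Fin n → ℕ)}
    {Q : LInf n ν →L[ℂ] LInf n ν} (hQ : IsPolyProj n ν I Q) : projConst n ν I ≤ ‖Q‖ := by
  refine csInf_le ⟨0, ?_⟩ ⟨Q, hQ.1, hQ.2, rfl⟩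
  rintro r ⟨Q', -, -, rfl⟩
  exact norm_nonneg Q'

lemma projNorms_nonempty (n : ℕ) (ν : (Fin n → ℂ) → ℝ) (I : Finset (Fin n → ℕ)) :
    {r : ℝ | ∃ Q : LInf n ν →L[ℂ] LInf n ν,
      (∀ f, Q f ∈ polyCopy n ν I) ∧ (∀ f ∈ polyCopy n ν I, Q f = f) ∧ ‖Q‖ = r}.Nonempty := by
  obtain ⟨Q, hQ⟩ := exists_isPolyProj n ν I
  exact ⟨‖Q‖, Q, hQ.1, hQ.2, rfl⟩

lemma le_projConst {n : ℕ} {ν : (Fin n → ℂ) → ℝ} {I : Finset (Fin n → ℕ)} {b : ℝ}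
    (h : ∀ Q, IsPolyProj n ν I Q → b ≤ ‖Q‖) : b ≤ projConst n ν I := by
  refine le_csInf (projNorms_nonempty n ν I) ?_
  rintro r ⟨Q, h1, h2, rfl⟩
  exact h Q ⟨h1, h2⟩

lemma exists_isPolyProj_norm_lt (n : ℕ) (ν : (Fin n → ℂ) → ℝ) (I : Finset (Fin n → ℕ))
    {ε : ℝ} (hε : 0 < ε) : ∃ Q, IsPolyProj n ν I Q ∧ ‖Q‖ < projConst n ν I + ε := by
  obtain ⟨r, ⟨Q, h1, h2, rfl⟩, hr⟩ :=
    exists_lt_of_csInf_lt (projNorms_nonempty n ν I) (lt_add_of_pos_right _ hε)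
  exact ⟨Q, ⟨h1, h2⟩, hr⟩

/-! ### Extraction of homogeneous parts -/

section
variable {n : ℕ} {ν : (Fin n → ℂ) → ℝ}

/-- Multiplication by a unimodular scalar on the unit sphere. -/
def rotPt (hsmul : ∀ (a : ℂ) (z : Fin n → ℂ), ν (a • z) = ‖a‖ * ν z) (u : ℂ) (hu : ‖u‖ = 1)
    (s : Sph n ν) : Sph n ν :=
  ⟨u • (s : Fin n → ℂ), by rw [hsmul, hu, s.2, one_mul]⟩

/-- The rotation operator `f ↦ f (u · )` on `ℓ∞(S)`, for unimodular `u`. -/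
noncomputable def rotOp (hsmul : ∀ (a : ℂ) (z : Fin n → ℂ), ν (a • z) = ‖a‖ * ν z)
    (u : ℂ) (hu : ‖u‖ = 1) : LInf n ν →L[ℂ] LInf n ν :=
  LinearMap.mkContinuous
    { toFun := fun f => ⟨fun s => f (rotPt hsmul u hu s), by
        refine memℓp_infty ⟨‖f‖, ?_⟩
        rintro _ ⟨s, rfl⟩
        exact lp.norm_apply_le_norm ENNReal.top_ne_zero f _⟩
      map_add' := fun f g => rfl
      map_smul' := fun a f => rfl } 1 fun f => by
    rw [one_mul]
    exact lp.norm_le_of_forall_le (norm_nonneg f) fun s =>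
      lp.norm_apply_le_norm ENNReal.top_ne_zero f _

lemma rotOp_apply (hsmul : ∀ (a : ℂ) (z : Fin n → ℂ), ν (a • z) = ‖a‖ * ν z)
    (u : ℂ) (hu : ‖u‖ = 1) (f : LInf n ν) (s : Sph n ν) :
    rotOp hsmul u hu f s = f (rotPt hsmul u hu s) := rfl

lemma norm_rotOp_le (hsmul : ∀ (a : ℂ) (z : Fin n → ℂ), ν (a • z) = ‖a‖ * ν z)
    (u : ℂ) (hu : ‖u‖ = 1) : ‖rotOp hsmul u hu‖ ≤ 1 :=
  LinearMap.mkContinuous_norm_le _ zero_le_one _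

/-- Discrete Fourier coefficient of order `k` along the orbits of the group of `N`-th roots of
unity generated by `ω`: `f ↦ N⁻¹ ∑_{j < N} ω^(-kj) f (ω^j · )`. -/
noncomputable def homPart (hsmul : ∀ (a : ℂ) (z : Fin n → ℂ), ν (a • z) = ‖a‖ * ν z)
    (ω : ℂ) (hω : ‖ω‖ = 1) (N k : ℕ) : LInf n ν →L[ℂ] LInf n ν :=
  (N : ℂ)⁻¹ • ∑ j ∈ Finset.range N,
    ((ω ^ k)⁻¹ ^ j) • rotOp hsmul (ω ^ j) (by rw [norm_pow, hω, one_pow])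

variable (hsmul : ∀ (a : ℂ) (z : Fin n → ℂ), ν (a • z) = ‖a‖ * ν z)

lemma norm_homPart_le (ω : ℂ) (hω : ‖ω‖ = 1) (N k : ℕ) (hN : N ≠ 0) :
    ‖homPart hsmul ω hω N k‖ ≤ 1 := by
  have hN' : (0 : ℝ) < N := by positivity
  have h : ‖∑ j ∈ Finset.range N,
      ((ω ^ k)⁻¹ ^ j) • rotOp hsmul (ω ^ j) (by rw [norm_pow, hω, one_pow])‖ ≤ N := by
    refine (norm_sum_le_of_le (f := fun j => ((ω ^ k)⁻¹ ^ j) • rotOp hsmul (ω ^ j)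
      (by rw [norm_pow, hω, one_pow])) (n := fun _ => (1 : ℝ)) _ fun j _ => ?_).trans (by simp)
    have h1 : ‖(ω ^ k)⁻¹ ^ j‖ = 1 := by simp [hω]
    rw [norm_smul, h1, one_mul]
    exact norm_rotOp_le _ _ _
  rw [homPart, norm_smul, norm_inv, Complex.norm_natCast]
  calc (N : ℝ)⁻¹ * _ ≤ (N : ℝ)⁻¹ * N := by gcongr
    _ = 1 := inv_mul_cancel₀ hN'.ne'

lemma homPart_apply (ω : ℂ) (hω : ‖ω‖ = 1) (N k : ℕ) (f : LInf n ν) (s : Sph n ν) :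
    homPart hsmul ω hω N k f s = (N : ℂ)⁻¹ * ∑ j ∈ Finset.range N, (ω ^ k)⁻¹ ^ j *
      f (rotPt hsmul (ω ^ j) (by rw [norm_pow, hω, one_pow]) s) := by
  rw [homPart, smul_apply, lp.coeFn_smul, Pi.smul_apply, smul_eq_mul,
    sum_apply, lp.coeFn_sum, Finset.sum_apply]
  rfl

/-- Orthogonality of characters on the group of `N`-th roots of unity. -/
lemma avg_root {ω : ℂ} {N : ℕ} (hN : N ≠ 0) (hω : IsPrimitiveRoot ω N) {d k : ℕ}
    (hd : d < N) (hk : k < N) :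
    (N : ℂ)⁻¹ * ∑ j ∈ Finset.range N, (ω ^ k)⁻¹ ^ j * (ω ^ j) ^ d = if d = k then 1 else 0 := by
  have hω0 : ω ≠ 0 := hω.ne_zero hN
  have e : ∀ j, (ω ^ k)⁻¹ ^ j * (ω ^ j) ^ d = ((ω ^ k)⁻¹ * ω ^ d) ^ j := fun j => by
    rw [mul_pow, ← pow_mul ω j d, mul_comm j d, pow_mul]
  simp only [e]
  split_ifs with h
  · subst h
    rw [inv_mul_cancel₀ (pow_ne_zero _ hω0)]
    simp [hN]
  · have hζ : (ω ^ k)⁻¹ * ω ^ d ≠ 1 := fun h1 => by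
      rw [inv_mul_eq_one₀ (pow_ne_zero _ hω0)] at h1
      exact h (hω.pow_inj hk hd h1).symm
    rw [geom_sum_eq hζ, mul_pow, inv_pow, ← pow_mul, ← pow_mul, mul_comm k, mul_comm d, pow_mul,
      pow_mul, hω.pow_eq_one]
    simp

/-- `homPart` maps a polynomial of degree less than `N` to its `k`-homogeneous part. -/
lemma homPart_apply_of_poly {ω : ℂ} (hω1 : ‖ω‖ = 1) {N : ℕ} (hN : N ≠ 0)
    (hω : IsPrimitiveRoot ω N) {J : Finset (Fin n → ℕ)} (hJ : ∀ α ∈ J, ∑ j, α j < N)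
    {k : ℕ} (hk : k < N) {f : LInf n ν} {c : (Fin n → ℕ) → ℂ}
    (hf : ∀ s : Sph n ν, f s = ∑ α ∈ J, c α * ∏ j, (s : Fin n → ℂ) j ^ α j) (s : Sph n ν) :
    homPart hsmul ω hω1 N k f s =
      ∑ α ∈ J with ∑ j, α j = k, c α * ∏ j, (s : Fin n → ℂ) j ^ α j := by
  have hmono : ∀ (u : ℂ) (α : Fin n → ℕ),
      ∏ j, (u • (s : Fin n → ℂ)) j ^ α j =
        u ^ (∑ j, α j) * ∏ j, (s : Fin n → ℂ) j ^ α j := fun u α => by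
    simp only [Pi.smul_apply, smul_eq_mul, mul_pow]
    rw [Finset.prod_mul_distrib, Finset.prod_pow_eq_pow_sum]
  rw [homPart_apply]
  simp only [hf, rotPt, hmono, Finset.mul_sum]
  rw [Finset.sum_comm, Finset.sum_filter]
  refine Finset.sum_congr rfl fun α hα => ?_
  have h := avg_root hN hω (hJ α hα) hk
  calc _ = ((N : ℂ)⁻¹ * ∑ j ∈ Finset.range N, (ω ^ k)⁻¹ ^ j * (ω ^ j) ^ (∑ i, α i)) *
        (c α * ∏ j, (s : Fin n → ℂ) j ^ α j) := by
        rw [Finset.mul_sum, Finset.sum_mul]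
        exact Finset.sum_congr rfl fun j _ => by ring
    _ = _ := by rw [h]; split_ifs <;> simp

end

lemma polyCopy_mono {n : ℕ} {ν : (Fin n → ℂ) → ℝ} {I J : Finset (Fin n → ℕ)} (h : I ⊆ J) :
    polyCopy n ν I ⊆ polyCopy n ν J := by
  classical
  rintro f ⟨c, hc⟩
  refine ⟨fun α => if α ∈ I then c α else 0, fun s => ?_⟩
  rw [hc s, ← Finset.sum_subset h fun α _ hα => by simp [hα]]
  exact Finset.sum_congr rfl fun α hα => by simp [hα]

/-- **The projection constant of `𝒫_J(X_n)` is controlled by the projection constants of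
its homogeneous building blocks.** -/
theorem stmt_10 (n m : ℕ) (ν : (Fin n → ℂ) → ℝ)
    (hdef : ∀ z, ν z = 0 → z = 0)
    (hsmul : ∀ (a : ℂ) (z : Fin n → ℂ), ν (a • z) = ‖a‖ * ν z)
    (htri : ∀ z w : Fin n → ℂ, ν (z + w) ≤ ν z + ν w)
    (J : Finset (Fin n → ℕ)) (hJne : J.Nonempty)
    (hdeg : ∀ α ∈ J, ∑ j, α j ≤ m) (hdeg' : ∃ α ∈ J, ∑ j, α j = m) :
    (⨆ k : Fin (m + 1), projConst n ν (J.filter fun α => ∑ j, α j = (k : ℕ)))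
        ≤ projConst n ν J ∧
      projConst n ν J ≤
        (m + 1) * ⨆ k : Fin (m + 1), projConst n ν (J.filter fun α => ∑ j, α j = (k : ℕ)) := by
  have hN : m + 1 ≠ 0 := Nat.succ_ne_zero m
  have hω := Complex.isPrimitiveRoot_exp (m + 1) hN
  set ω : ℂ := Complex.exp (2 * Real.pi * Complex.I / (m + 1 : ℕ))
  have hω1 : ‖ω‖ = 1 := hω.norm'_eq_one hN
  have hJ : ∀ α ∈ J, ∑ j, α j < m + 1 := fun α hα => Nat.lt_succ_of_le (hdeg α hα)
  let H : Fin (m + 1) → LInf n ν →L[ℂ] LInf n ν := fun k => homPart hsmul ω hω1 (m + 1) k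
  have hH1 : ∀ k, ‖H k‖ ≤ 1 := fun k => norm_homPart_le hsmul ω hω1 _ _ hN
  have hHmem : ∀ k : Fin (m + 1), ∀ f ∈ polyCopy n ν J,
      H k f ∈ polyCopy n ν (J.filter fun α => ∑ j, α j = (k : ℕ)) := by
    rintro k f ⟨c, hc⟩
    exact ⟨c, homPart_apply_of_poly hsmul hω1 hN hω hJ k.2 hc⟩
  constructor
  · refine ciSup_le fun k => le_projConst fun Q hQ => ?_
    refine (projConst_le (Q := (H k).comp Q) ⟨fun f => hHmem k _ (hQ.1 f), fun f hf => ?_⟩).trans ?_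
    · rw [ContinuousLinearMap.comp_apply, hQ.2 f (polyCopy_mono (Finset.filter_subset _ _) hf)]
      obtain ⟨c, hc⟩ := hf
      apply lp.ext
      funext s
      refine (homPart_apply_of_poly hsmul hω1 hN hω
        (fun α hα => hJ α (Finset.mem_of_mem_filter α hα)) k.2 hc s).trans ?_
      rw [Finset.filter_filter, hc s]
      simp only [and_self]
    · calc ‖(H k).comp Q‖ ≤ ‖H k‖ * ‖Q‖ := ContinuousLinearMap.opNorm_comp_le _ _
        _ ≤ 1 * ‖Q‖ := by gcongr; exact hH1 k
        _ = ‖Q‖ := one_mul _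
  · set M := ⨆ k : Fin (m + 1), projConst n ν (J.filter fun α => ∑ j, α j = (k : ℕ)) with hM
    have hle : ∀ k : Fin (m + 1), projConst n ν (J.filter fun α => ∑ j, α j = (k : ℕ)) ≤ M :=
      fun k => le_ciSup (f := fun k : Fin (m + 1) =>
        projConst n ν (J.filter fun α => ∑ j, α j = (k : ℕ))) (Set.finite_range _).bddAbove k
    have key : ∀ ε > 0, projConst n ν J ≤ (m + 1) * (M + ε) := by
      intro ε hε
      choose Q hQ hQn using fun k : Fin (m + 1) =>
        exists_isPolyProj_norm_lt n ν (J.filter fun α => ∑ j, α j = (k : ℕ)) hε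
      refine (projConst_le (Q := ∑ k, (Q k).comp (H k)) ⟨fun f => ?_, fun f hf => ?_⟩).trans ?_
      · rw [sum_apply]
        exact (polySub n ν J).sum_mem fun k _ =>
          polyCopy_mono (Finset.filter_subset _ _) ((hQ k).1 (H k f))
      · rw [sum_apply]
        have h1 : ∀ k, ((Q k).comp (H k)) f = H k f := fun k => (hQ k).2 _ (hHmem k f hf)
        simp only [h1]
        obtain ⟨c, hc⟩ := hf
        apply lp.ext
        funext s
        rw [lp.coeFn_sum, Finset.sum_apply, hc s]
        have h2 : ∀ k : Fin (m + 1), H k f s = ∑ α ∈ J with ∑ j, α j = (k : ℕ),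
            c α * ∏ j, (s : Fin n → ℂ) j ^ α j :=
          fun k => homPart_apply_of_poly hsmul hω1 hN hω hJ k.2 hc s
        simp only [h2]
        rw [Fin.sum_univ_eq_sum_range (fun k => ∑ α ∈ J with ∑ j, α j = k,
          c α * ∏ j, (s : Fin n → ℂ) j ^ α j) (m + 1)]
        exact Finset.sum_fiberwise_of_maps_to (fun α hα => Finset.mem_range.2 (hJ α hα)) _
      · calc ‖∑ k, (Q k).comp (H k)‖ ≤ ∑ _k : Fin (m + 1), (M + ε) := by
              refine norm_sum_le_of_le _ fun k _ => ?_
              calc ‖(Q k).comp (H k)‖ ≤ ‖Q k‖ * ‖H k‖ := ContinuousLinearMap.opNorm_comp_le _ _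
                _ ≤ ‖Q k‖ * 1 := by gcongr; exact hH1 k
                _ ≤ M + ε := by linarith [hQn k, hle k]
          _ = (m + 1) * (M + ε) := by simp [mul_add]
    refine le_of_forall_pos_le_add fun δ hδ => ?_
    have hm : (0 : ℝ) < m + 1 := by positivity
    have h := key (δ / (m + 1)) (div_pos hδ hm)
    rwa [mul_add, mul_div_cancel₀ _ hm.ne'] at h
end
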